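/- For every ε > 0 there exists C > 0 such that for every prime power q and all integers n ≥ m ≥ (2+ε)·(log n)/(log q), writing u = n/m, one has | log p_{n,m,q} − log ρ( n/m − n/(2m²) ) | ≤ C·( u·(log(u+1))²/m² + 1/u ). -/

import Mathlib

open Real

noncomputable section

/-- Predicate characterizing the Dickman function `ρ : [0,∞) → (0,∞)`:
continuous on `[0,∞)`, positive, equal to `1` on `[0,1]`, and satisfying the
delay differential equation `t·ρ'(t) + ρ(t-1) = 0` for `t > 1`. -/
def IsDickman (ρ : ℝ → ℝ) : Prop :=
  ContinuousOn ρ (Set.Ici 0) ∧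
  (∀ t : ℝ, 0 ≤ t → 0 < ρ t) ∧
  (∀ t ∈ Set.Icc (0:ℝ) 1, ρ t = 1) ∧
  (∀ t : ℝ, 1 < t → HasDerivAt ρ (-(ρ (t - 1)) / t) t)

/-- `ξ(u)`: for `u > 1`, the unique positive solution of `e^ξ = 1 + u·ξ`; otherwise `0`. -/
def xi (u : ℝ) : ℝ :=
  open Classical in
  if h : ∃ x : ℝ, 0 < x ∧ Real.exp x = 1 + u * x then h.choose else 0

/-- `p_{n,m}`: probability that a uniformly random permutation of `{1,…,n}` is `m`-friable,
i.e. has no cycle of length greater than `m`. -/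
def permProb (n m : ℕ) : ℝ :=
  (Nat.card {σ : Equiv.Perm (Fin n) // ∀ c ∈ σ.cycleType, c ≤ m} : ℝ) /
    (Nat.factorial n : ℝ)

/-- `p_{n,m,q}`: proportion of monic polynomials of degree `n` over a finite field `F`
(of cardinality `q`) that are `m`-friable, i.e. all of whose monic irreducible factors
have degree at most `m`. -/
def polyProb (F : Type) [Field F] [Fintype F] (n m : ℕ) : ℝ :=
  (Nat.card {f : Polynomial F // f.Monic ∧ f.natDegree = n ∧
      ∀ p : Polynomial F, p.Monic → Irreducible p → p ∣ f → p.natDegree ≤ m} : ℝ) /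
    (Fintype.card F : ℝ) ^ n

/-- `F_q(z) = ∏_{deg P ≤ m} (1 - (z/q)^{deg P})⁻¹`, the product over monic irreducible
polynomials `P` over `F` of degree at most `m`. -/
def FqFun (F : Type) [Field F] [Fintype F] (m : ℕ) (z : ℝ) : ℝ :=
  ∏ᶠ p ∈ {p : Polynomial F | p.Monic ∧ Irreducible p ∧ p.natDegree ≤ m},
    (1 - (z / (Fintype.card F : ℝ)) ^ p.natDegree)⁻¹

/-- `G_q(z) = F_q(z) · exp(-∑_{i=1}^m z^i/i)`. -/
def Gq (F : Type) [Field F] [Fintype F] (m : ℕ) (z : ℝ) : ℝ :=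
  FqFun F m z * Real.exp (-(∑ i ∈ Finset.Icc 1 m, z ^ i / (i : ℝ)))

/-- The coefficients `d_{m,i}`. -/
def dcoef (m i : ℕ) : ℝ :=
  if i = m then -(1 / (m : ℝ)) * ∑ j ∈ Finset.Icc 2 m, (1 : ℝ) / (j : ℝ)
  else Real.Gamma ((i : ℝ) + (i : ℝ) / (m : ℝ)) /
    (((m : ℝ) - (i : ℝ)) * (Nat.factorial i : ℝ) * Real.Gamma (1 + (i : ℝ) / (m : ℝ)))

/-- `T(s) = ∫₀^s ((e^t - 1)/t)·((t/m)/(1 - e^{-t/m}) - 1) dt`, integrand extended by `0` at `t = 0`. -/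
def Tfun (m : ℕ) (s : ℝ) : ℝ :=
  ∫ t in (0:ℝ)..s,
    if t = 0 then 0 else
      ((Real.exp t - 1) / t) * ((t / (m : ℝ)) / (1 - Real.exp (-t / (m : ℝ))) - 1)

end

/-!
The generating function of `p n = polyProb F n m` has a logarithmic derivative `L` with
`Lⱼ = 1` for `j < m` and `0 ≤ Lⱼ ≤ 2 q ^ (-(j + 1) / 2)` for `j ≥ m`. Hence `n * p n` is the sum
of `p` over the `m` preceding indices plus a small tail, a discrete analogue of
`t * ρ t = ∫ s in (t - 1)..t, ρ s`. On the grid `w n = (2 n + 1) / (2 m + 1)`, whose cells of length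
`2 / (2 m + 1)` have the points `w n` as midpoints, the integral is close to the sum: convexity of
`ρ` turns a multiple of `ρ ∘ w` into a supersolution of the recurrence without tail, and
log-concavity of `ρ`, with `-ρ' / ρ` of size `O(log (u + 1))`, turns
`ρ (w n) * exp (-c * n)` into a subsolution of it. The tail multiplies the generating function by
a power series with coefficients `g k`; by log-concavity it changes the upper bound by the factor
`∑ g k * r ^ k` with `r ^ m ≈ exp (-(ρ' / ρ) (w n))`, which is `1 + O(1 / m)` because
`q ^ (m / 2) ≥ n ^ (1 + ε / 2)`. Finally `w n` differs from `n / m - n / (2 m ^ 2)` by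
`O(1 / m + u / m ^ 2)`, and bounded `m` is covered by crude bounds.
-/

/-! ### Power series with a given logarithmic derivative -/

section LogDeriv

open PowerSeries Finset.HasAntidiagonal

variable {K : Type*}

/-- `f` is the power series with constant coefficient `1` and logarithmic derivative `L`, in other
words `f = exp (∑ⱼ Lⱼ X ^ (j + 1) / (j + 1))`. -/
structure HasLogDeriv [CommRing K] (L f : K⟦X⟧) : Prop where
  constantCoeff_eq : constantCoeff f = 1
  derivative_eq : d⁄dX K f = L * f

theorem sum_range_sum_antidiagonal_le_mul [Semiring K] [PartialOrder K] [IsOrderedRing K]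
    {f g : ℕ → K} (hf : ∀ i, 0 ≤ f i) (hg : ∀ i, 0 ≤ g i) (n : ℕ) :
    ∑ k ∈ Finset.range n, ∑ x ∈ antidiagonal k, f x.1 * g x.2 ≤
      (∑ i ∈ Finset.range n, f i) * ∑ j ∈ Finset.range n, g j := by
  have fiber : ∀ k ∈ Finset.range n, ∑ x ∈ antidiagonal k, f x.1 * g x.2 =
      ∑ x ∈ Finset.range n ×ˢ Finset.range n with x.1 + x.2 = k, f x.1 * g x.2 := by
    intro k hk
    congr 1
    ext x
    simp only [mem_antidiagonal, Finset.mem_filter, Finset.mem_product,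
      Finset.mem_range] at hk ⊢
    omega
  rw [Finset.sum_congr rfl fiber, Finset.sum_mul_sum, ← Finset.sum_product']
  exact Finset.sum_fiberwise_le_sum_of_sum_fiber_nonneg
    fun y _ => Finset.sum_nonneg fun x _ => mul_nonneg (hf _) (hg _)

namespace HasLogDeriv

theorem coeff_zero_eq [CommRing K] {L f : K⟦X⟧} (h : HasLogDeriv L f) : coeff 0 f = 1 := by
  rw [coeff_zero_eq_constantCoeff_apply, h.constantCoeff_eq]

theorem succ_mul_coeff_succ [CommRing K] {L f : K⟦X⟧} (h : HasLogDeriv L f) (n : ℕ) :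
    ((n : K) + 1) * coeff (n + 1) f =
      ∑ x ∈ antidiagonal n, coeff x.1 L * coeff x.2 f := by
  rw [← coeff_mul, ← h.derivative_eq, coeff_derivative, mul_comm]

theorem natCast_mul_coeff [CommRing K] {L f : K⟦X⟧} (h : HasLogDeriv L f) (n : ℕ) :
    (n : K) * coeff n f = ∑ j ∈ Finset.range n, coeff j L * coeff (n - 1 - j) f := by
  cases n with
  | zero => simp
  | succ n =>
    rw [Nat.cast_succ, h.succ_mul_coeff_succ, Finset.Nat.sum_antidiagonal_eq_sum_range_succ_mk]
    rfl

theorem of_natCast_mul_coeff [CommRing K] {L f : K⟦X⟧} (h₀ : coeff 0 f = 1)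
    (h : ∀ n : ℕ, (n : K) * coeff n f =
      ∑ j ∈ Finset.range n, coeff j L * coeff (n - 1 - j) f) : HasLogDeriv L f where
  constantCoeff_eq := by rwa [← coeff_zero_eq_constantCoeff_apply]
  derivative_eq := by
    ext n
    rw [coeff_derivative, mul_comm, ← Nat.cast_succ, h, coeff_mul,
      Finset.Nat.sum_antidiagonal_eq_sum_range_succ_mk]
    rfl

theorem mul_inv [Field K] {L M f g : K⟦X⟧} (hf : HasLogDeriv L f) (hg : HasLogDeriv M g) :
    HasLogDeriv (L - M) (f * g⁻¹) where
  constantCoeff_eq := by simp [hf.constantCoeff_eq, hg.constantCoeff_eq]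
  derivative_eq := by
    have hg₀ : constantCoeff g ≠ 0 := by simp [hg.constantCoeff_eq]
    rw [Derivation.leibniz, derivative_inv', hf.derivative_eq, hg.derivative_eq]
    simp only [smul_eq_mul]
    linear_combination -(f * M * g⁻¹) * PowerSeries.mul_inv_cancel g hg₀

theorem exists_hasLogDeriv [Field K] [Algebra ℚ K] (L : K⟦X⟧) : ∃ f, HasLogDeriv L f := by
  set g : K⟦X⟧ := PowerSeries.mk fun j => coeff (j - 1) L / j with hg
  have hg₀ : constantCoeff g = 0 := by
    rw [← coeff_zero_eq_constantCoeff_apply, hg, coeff_mk, Nat.cast_zero, div_zero]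
  have : CharZero K := algebraRat.charZero K
  have hdg : d⁄dX K g = L := by
    ext n
    rw [coeff_derivative, coeff_mk, Nat.add_sub_cancel, Nat.cast_succ,
      div_mul_cancel₀ _ (Nat.cast_add_one_ne_zero n)]
  have hs : HasSubst g := HasSubst.of_constantCoeff_zero' hg₀
  refine ⟨(exp K).subst g, ?_, ?_⟩
  · rw [← coeff_zero_eq_constantCoeff_apply, coeff_subst' hs, finsum_eq_single _ 0]
    · simp
    · intro d hd
      simp [hg₀, hd]
  · rw [derivative_subst hs, derivative_exp, hdg, mul_comm]

variable [Field K] [LinearOrder K] [IsStrictOrderedRing K] {L f : K⟦X⟧}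

theorem coeff_nonneg (h : HasLogDeriv L f) (hL : ∀ j, 0 ≤ coeff j L) (n : ℕ) :
    0 ≤ coeff n f := by
  induction n using Nat.strong_induction_on with
  | _ n ih =>
    rcases n.eq_zero_or_pos with rfl | hn
    · exact h.coeff_zero_eq ▸ zero_le_one
    · refine nonneg_of_mul_nonneg_right ?_ (Nat.cast_pos (α := K).2 hn)
      rw [h.natCast_mul_coeff]
      exact Finset.sum_nonneg fun j _ => mul_nonneg (hL j) (ih _ (by omega))

theorem coeff_succ_mul_pow_le (h : HasLogDeriv L f) (hL : ∀ j, 0 ≤ coeff j L) {r : K}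
    (hr : 0 ≤ r) (n : ℕ) :
    coeff (n + 1) f * r ^ (n + 1) ≤ ∑ x ∈ antidiagonal n,
      (coeff x.1 L * r ^ (x.1 + 1) / (x.1 + 1)) * (coeff x.2 f * r ^ x.2) := by
  have hn : (0 : K) < n + 1 := by positivity
  rw [eq_div_of_mul_eq hn.ne' ((mul_comm _ _).trans (h.succ_mul_coeff_succ n)),
    div_mul_eq_mul_div, Finset.sum_mul, Finset.sum_div]
  refine Finset.sum_le_sum fun x hx => ?_
  rw [mem_antidiagonal] at hx
  have hLx := hL x.1
  have hfx := h.coeff_nonneg hL x.2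
  have hle : (x.1 : K) ≤ n := by exact_mod_cast hx ▸ Nat.le_add_right _ _
  calc coeff x.1 L * coeff x.2 f * r ^ (n + 1) / (n + 1)
      ≤ coeff x.1 L * coeff x.2 f * r ^ (n + 1) / (x.1 + 1) := by gcongr
    _ = coeff x.1 L * r ^ (x.1 + 1) / (x.1 + 1) * (coeff x.2 f * r ^ x.2) := by
      rw [← hx]; ring

theorem sum_coeff_mul_pow_le (h : HasLogDeriv L f) (hL : ∀ j, 0 ≤ coeff j L) {r : K}
    (hr : 0 ≤ r) (n : ℕ) :
    ∑ k ∈ Finset.range (n + 1), coeff k f * r ^ k ≤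
      1 + (∑ j ∈ Finset.range n, coeff j L * r ^ (j + 1) / (j + 1)) *
        ∑ k ∈ Finset.range n, coeff k f * r ^ k := by
  have hf := h.coeff_nonneg hL
  rw [Finset.sum_range_succ', h.coeff_zero_eq, pow_zero, mul_one, add_comm]
  gcongr
  refine (Finset.sum_le_sum fun k _ => h.coeff_succ_mul_pow_le hL hr k).trans ?_
  exact sum_range_sum_antidiagonal_le_mul
    (f := fun i => coeff i L * r ^ (i + 1) / (i + 1)) (g := fun j => coeff j f * r ^ j)
    (fun i => have := hL i; by positivity) (fun j => have := hf j; by positivity) n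

end HasLogDeriv

end LogDeriv

/-! ### Friable polynomials -/

section Friable

open Polynomial UniqueFactorizationMonoid

variable {F : Type*} [Field F]

open Classical in
theorem natDegree_eq_sum_count_normalizedFactors {f : F[X]} (hf : f.Monic) : f.natDegree =
    ∑ P ∈ (normalizedFactors f).toFinset, (normalizedFactors f).count P * P.natDegree := by
  have hmonic : ∀ P ∈ normalizedFactors f, P.Monic := fun P hP =>
    normalize_normalized_factor P hP ▸
      monic_normalize (irreducible_of_normalized_factor P hP).ne_zero
  conv_lhs => rw [← hf.normalize_eq_self, ← prod_normalizedFactors_eq hf.ne_zero,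
    natDegree_multiset_prod_of_monic _ hmonic, Finset.sum_multiset_map_count]
  simp only [smul_eq_mul]

open Classical in
theorem pow_dvd_iff_le_count_normalizedFactors {P f : F[X]} (hP : P.Monic) (hP' : Irreducible P)
    (hf : f ≠ 0) (k : ℕ) : P ^ k ∣ f ↔ k ≤ (normalizedFactors f).count P := by
  rw [pow_dvd_iff_le_emultiplicity, emultiplicity_eq_count_normalizedFactors hP' hf,
    hP.normalize_eq_self]
  exact Nat.cast_le

open Classical in
theorem sum_pow_dvd_natDegree {P f : F[X]} (hP : P.Monic) (hP' : Irreducible P) (hf : f ≠ 0) :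
    ∑ k ∈ Finset.Icc 1 f.natDegree, (if P ^ k ∣ f then P.natDegree else 0) =
      (normalizedFactors f).count P * P.natDegree := by
  set c := (normalizedFactors f).count P
  have hc : c ≤ f.natDegree := by
    have hdvd := (pow_dvd_iff_le_count_normalizedFactors hP hP' hf c).2 le_rfl
    calc c ≤ c * P.natDegree := Nat.le_mul_of_pos_right c hP'.natDegree_pos
      _ = (P ^ c).natDegree := (natDegree_pow P c).symm
      _ ≤ f.natDegree := natDegree_le_of_dvd hdvd hf
  have hfilter : (Finset.Icc 1 f.natDegree).filter (P ^ · ∣ f) = Finset.Icc 1 c := by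
    ext k
    simp only [Finset.mem_filter, Finset.mem_Icc,
      pow_dvd_iff_le_count_normalizedFactors hP hP' hf]
    omega
  rw [← Finset.sum_filter, hfilter, Finset.sum_const, Nat.card_Icc, Nat.add_sub_cancel,
    smul_eq_mul]

theorem sum_mul_le_eq_sum_dvd {M : Type*} [AddCommMonoid M] (a : ℕ → M) (n : ℕ) {d : ℕ}
    (hd : 0 < d) :
    ∑ k ∈ Finset.Icc 1 n, (if k * d ≤ n then a (k * d) else 0) =
      ∑ j ∈ Finset.Icc 1 n, (if d ∣ j then a j else 0) := by
  rw [← Finset.sum_filter, ← Finset.sum_filter]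
  refine Finset.sum_bij (fun k _ => k * d) (fun k hk => ?_)
    (fun k _ l _ h => Nat.eq_of_mul_eq_mul_right hd h) (fun j hj => ?_) (fun k _ => rfl)
  · simp only [Finset.mem_filter, Finset.mem_Icc] at hk ⊢
    exact ⟨⟨Nat.mul_pos hk.1.1 hd, hk.2⟩, dvd_mul_left d k⟩
  · simp only [Finset.mem_filter, Finset.mem_Icc] at hj
    obtain ⟨⟨hj₀, hjn⟩, k, rfl⟩ := hj
    refine ⟨k, ?_, mul_comm k d⟩
    simp only [Finset.mem_filter, Finset.mem_Icc]
    exact ⟨⟨Nat.pos_of_mul_pos_left hj₀, (Nat.le_mul_of_pos_left k hd).trans hjn⟩,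
      mul_comm d k ▸ hjn⟩

variable [Finite F]

theorem finite_monic_natDegree_eq (n : ℕ) : {f : F[X] | f.Monic ∧ f.natDegree = n}.Finite :=
  Finite.of_injective _
    ((monicEquivDegreeLT (R := F) n).trans (degreeLTEquiv F n).toEquiv).injective

theorem finite_monic_irreducible_natDegree_le (m : ℕ) :
    {f : F[X] | f.Monic ∧ Irreducible f ∧ f.natDegree ≤ m}.Finite :=
  ((Set.finite_Iic m).biUnion fun n _ => finite_monic_natDegree_eq n).subset fun _ hf =>
    Set.mem_biUnion (Set.mem_Iic.2 hf.2.2) ⟨hf.1, rfl⟩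

variable (F) in
/-- The `m`-friable monic polynomials of degree `n`. -/
noncomputable def friablePolys (n m : ℕ) : Finset F[X] :=
  ((finite_monic_natDegree_eq n).inter_of_left
    {f | ∀ p : F[X], p.Monic → Irreducible p → p ∣ f → p.natDegree ≤ m}).toFinset

variable (F) in
/-- The monic irreducible polynomials of degree at most `m`: the primes which an `m`-friable
polynomial may contain. -/
noncomputable def smallPrimes (m : ℕ) : Finset F[X] :=
  (finite_monic_irreducible_natDegree_le m).toFinset

theorem mem_friablePolys {n m : ℕ} {f : F[X]} : f ∈ friablePolys F n m ↔
    f.Monic ∧ f.natDegree = n ∧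
      ∀ p : F[X], p.Monic → Irreducible p → p ∣ f → p.natDegree ≤ m := by
  simp [friablePolys, and_assoc]

theorem mem_smallPrimes {m : ℕ} {P : F[X]} :
    P ∈ smallPrimes F m ↔ P.Monic ∧ Irreducible P ∧ P.natDegree ≤ m := by
  simp [smallPrimes]

open Classical in
theorem sum_smallPrimes_pow_dvd {n m : ℕ} {f : F[X]} (hf : f ∈ friablePolys F n m) :
    ∑ P ∈ smallPrimes F m, ∑ k ∈ Finset.Icc 1 n, (if P ^ k ∣ f then P.natDegree else 0) = n := by
  obtain ⟨hmonic, rfl, hfriable⟩ := mem_friablePolys.1 hf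
  have hsub : (normalizedFactors f).toFinset ⊆ smallPrimes F m := by
    intro P hP
    rw [Multiset.mem_toFinset] at hP
    have hirr := irreducible_of_normalized_factor P hP
    have hPmonic : P.Monic := normalize_normalized_factor P hP ▸ monic_normalize hirr.ne_zero
    exact mem_smallPrimes.2
      ⟨hPmonic, hirr, hfriable P hPmonic hirr (dvd_of_mem_normalizedFactors hP)⟩
  conv_rhs => rw [natDegree_eq_sum_count_normalizedFactors hmonic]
  rw [Finset.sum_subset hsub fun P _ hP => by
    rw [Multiset.mem_toFinset] at hP
    rw [Multiset.count_eq_zero_of_notMem hP, zero_mul]]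
  refine Finset.sum_congr rfl fun P hP => ?_
  obtain ⟨hPmonic, hirr, -⟩ := mem_smallPrimes.1 hP
  exact sum_pow_dvd_natDegree hPmonic hirr hmonic.ne_zero

open Classical in
theorem filter_pow_dvd_friablePolys {n m k : ℕ} {P : F[X]} (hP : P ∈ smallPrimes F m)
    (h : k * P.natDegree ≤ n) :
    (friablePolys F n m).filter (P ^ k ∣ ·) =
      (friablePolys F (n - k * P.natDegree) m).image (P ^ k * ·) := by
  obtain ⟨hPmonic, hirr, hdeg⟩ := mem_smallPrimes.1 hP
  have hPk : (P ^ k).Monic := hPmonic.pow k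
  ext f
  simp only [Finset.mem_filter, Finset.mem_image, mem_friablePolys]
  constructor
  · rintro ⟨⟨hf, hfn, hfm⟩, g, rfl⟩
    have hg : g.Monic := hPk.of_mul_monic_left hf
    refine ⟨g, ⟨hg, ?_, fun p hp hp' hpg => hfm p hp hp' (hpg.mul_left _)⟩, rfl⟩
    rw [hPk.natDegree_mul hg, natDegree_pow] at hfn
    omega
  · rintro ⟨g, ⟨hg, hgn, hgm⟩, rfl⟩
    refine ⟨⟨hPk.mul hg, ?_, fun p hp hp' hpf => ?_⟩, dvd_mul_right _ _⟩
    · rw [hPk.natDegree_mul hg, natDegree_pow]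
      omega
    · rcases hp'.prime.dvd_or_dvd hpf with hpP | hpg
      · exact (natDegree_le_of_dvd (hp'.prime.dvd_of_dvd_pow hpP) hirr.ne_zero).trans hdeg
      · exact hgm p hp hp' hpg

open Classical in
theorem card_filter_pow_dvd_friablePolys {n m k : ℕ} {P : F[X]} (hP : P ∈ smallPrimes F m) :
    ((friablePolys F n m).filter (P ^ k ∣ ·)).card =
      if k * P.natDegree ≤ n then (friablePolys F (n - k * P.natDegree) m).card else 0 := by
  split_ifs with h
  · have hPk : P ^ k ≠ 0 := ((mem_smallPrimes.1 hP).1.pow k).ne_zero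
    rw [filter_pow_dvd_friablePolys hP h,
      Finset.card_image_of_injective _ fun a b hab => mul_left_cancel₀ hPk hab]
  · refine Finset.card_eq_zero.2 (Finset.filter_eq_empty_iff.2 fun f hf hdvd => h ?_)
    obtain ⟨hmonic, rfl, -⟩ := mem_friablePolys.1 hf
    exact natDegree_pow P k ▸ natDegree_le_of_dvd hdvd hmonic.ne_zero

variable (F) in
/-- The sum of `deg P` over the prime powers `P ^ k` of degree exactly `j` with `deg P ≤ m`
(for `j ≠ 0`): the von Mangoldt function of `F[X]` restricted to small primes, summed over the
monic polynomials of degree `j`. -/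
noncomputable def mangoldtSum (m j : ℕ) : ℕ :=
  ∑ P ∈ smallPrimes F m with P.natDegree ∣ j, P.natDegree

-- Count the pairs `(P ^ k, f)` with `P ^ k ∣ f` and weight `deg P` in two ways.
theorem mul_card_friablePolys (n m : ℕ) : n * (friablePolys F n m).card =
    ∑ j ∈ Finset.Icc 1 n, mangoldtSum F m j * (friablePolys F (n - j) m).card := by
  classical
  calc n * (friablePolys F n m).card
      = ∑ f ∈ friablePolys F n m, ∑ P ∈ smallPrimes F m, ∑ k ∈ Finset.Icc 1 n,
          (if P ^ k ∣ f then P.natDegree else 0) := by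
        rw [Finset.sum_congr rfl fun f hf => sum_smallPrimes_pow_dvd hf, Finset.sum_const,
          smul_eq_mul, mul_comm]
    _ = ∑ P ∈ smallPrimes F m, ∑ k ∈ Finset.Icc 1 n,
          ((friablePolys F n m).filter (P ^ k ∣ ·)).card * P.natDegree := by
        rw [Finset.sum_comm]
        refine Finset.sum_congr rfl fun P _ => ?_
        rw [Finset.sum_comm]
        refine Finset.sum_congr rfl fun k _ => ?_
        rw [← Finset.sum_filter, Finset.sum_const, smul_eq_mul]
    _ = ∑ P ∈ smallPrimes F m, ∑ j ∈ Finset.Icc 1 n,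
          (if P.natDegree ∣ j then P.natDegree * (friablePolys F (n - j) m).card else 0) := by
        refine Finset.sum_congr rfl fun P hP => ?_
        rw [← sum_mul_le_eq_sum_dvd (fun j => P.natDegree * (friablePolys F (n - j) m).card) n
          (mem_smallPrimes.1 hP).2.1.natDegree_pos]
        refine Finset.sum_congr rfl fun k _ => ?_
        rw [card_filter_pow_dvd_friablePolys hP, ite_mul, zero_mul, mul_comm P.natDegree]
    _ = ∑ j ∈ Finset.Icc 1 n, mangoldtSum F m j * (friablePolys F (n - j) m).card := by
        rw [Finset.sum_comm]
        refine Finset.sum_congr rfl fun j _ => ?_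
        rw [mangoldtSum, Finset.sum_mul, Finset.sum_filter]

theorem sum_natDegree_smallPrimes_eq_le (m d : ℕ) :
    ∑ P ∈ smallPrimes F m with P.natDegree = d, P.natDegree ≤ mangoldtSum F d d := by
  refine Finset.sum_le_sum_of_subset fun P hP => ?_
  simp only [Finset.mem_filter, mem_smallPrimes] at hP ⊢
  exact ⟨⟨hP.1.1, hP.1.2.1, hP.2.le⟩, hP.2 ▸ dvd_rfl⟩

end Friable

section PolyProb

open Polynomial

variable {F : Type*} [Field F] [Fintype F]

theorem card_monic_natDegree_eq (n : ℕ) :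
    Nat.card {f : F[X] // f.Monic ∧ f.natDegree = n} = Fintype.card F ^ n := by
  rw [Nat.card_congr ((monicEquivDegreeLT (R := F) n).trans (degreeLTEquiv F n).toEquiv)]
  simp

theorem card_monic_toFinset (n : ℕ) :
    (finite_monic_natDegree_eq (F := F) n).toFinset.card = Fintype.card F ^ n := by
  rw [← card_monic_natDegree_eq]
  exact (Nat.subtype_card _ fun f => by simp).symm

theorem card_friablePolys_le (n m : ℕ) : (friablePolys F n m).card ≤ Fintype.card F ^ n :=
  card_monic_toFinset (F := F) n ▸
    Finset.card_le_card (Set.Finite.toFinset_subset_toFinset.2 Set.inter_subset_left)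

theorem card_friablePolys_of_le {n m : ℕ} (h : n ≤ m) :
    (friablePolys F n m).card = Fintype.card F ^ n := by
  rw [← card_monic_toFinset]
  congr 1
  ext f
  simp only [mem_friablePolys, Set.Finite.mem_toFinset, Set.mem_ofPred_eq]
  refine ⟨fun hf => ⟨hf.1, hf.2.1⟩, fun ⟨hmonic, hdeg⟩ => ⟨hmonic, hdeg, fun p _ _ hpf => ?_⟩⟩
  exact (natDegree_le_of_dvd hpf hmonic.ne_zero).trans (hdeg ▸ h)

end PolyProb

section PolyProb

variable {F : Type} [Field F] [Fintype F]

theorem polyProb_eq_card_div (n m : ℕ) :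
    polyProb F n m = (friablePolys F n m).card / (Fintype.card F : ℝ) ^ n := by
  rw [polyProb, Nat.subtype_card _ fun f => mem_friablePolys]

theorem polyProb_le_one (n m : ℕ) : polyProb F n m ≤ 1 := by
  rw [polyProb_eq_card_div]
  exact div_le_one_of_le₀ (mod_cast card_friablePolys_le n m) (by positivity)

theorem polyProb_of_le {n m : ℕ} (h : n ≤ m) : polyProb F n m = 1 := by
  rw [polyProb_eq_card_div, card_friablePolys_of_le h, Nat.cast_pow]
  exact div_self (pow_ne_zero n (Nat.cast_ne_zero.2 Fintype.card_ne_zero))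

variable (F) in
/-- The logarithmic derivative of the generating function `∑ₙ polyProb F n m * X ^ n` of
`m`-friable polynomials. -/
noncomputable def friableLogDeriv (m : ℕ) : PowerSeries ℝ :=
  PowerSeries.mk fun j => mangoldtSum F m (j + 1) / (Fintype.card F : ℝ) ^ (j + 1)

theorem hasLogDeriv_polyProb (m : ℕ) :
    HasLogDeriv (friableLogDeriv F m) (PowerSeries.mk fun n => polyProb F n m) := by
  refine HasLogDeriv.of_natCast_mul_coeff (by simp [polyProb_of_le]) fun n => ?_
  have hrec := congrArg (Nat.cast (R := ℝ)) (mul_card_friablePolys (F := F) n m)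
  rw [← Finset.Ico_add_one_right_eq_Icc, Finset.sum_Ico_eq_sum_range] at hrec
  push_cast at hrec
  simp only [friableLogDeriv, PowerSeries.coeff_mk, polyProb_eq_card_div]
  rw [← mul_div_assoc, hrec, Finset.sum_div]
  refine Finset.sum_congr rfl fun j hj => ?_
  rw [Finset.mem_range] at hj
  rw [div_mul_div_comm, ← pow_add, add_comm 1 j, Nat.sub_add_eq n j 1, Nat.sub_right_comm,
    show j + 1 + (n - 1 - j) = n by omega]

theorem coeff_friableLogDeriv_of_lt {m j : ℕ} (h : j < m) :
    PowerSeries.coeff j (friableLogDeriv F m) = 1 := by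
  have hsum : ∀ n ≤ m, (n : ℝ) =
      ∑ j ∈ Finset.range n, PowerSeries.coeff j (friableLogDeriv F m) := by
    intro n hn
    have hrec := (hasLogDeriv_polyProb (F := F) m).natCast_mul_coeff n
    rw [PowerSeries.coeff_mk, polyProb_of_le hn, mul_one] at hrec
    rw [hrec]
    refine Finset.sum_congr rfl fun j _ => ?_
    rw [PowerSeries.coeff_mk, polyProb_of_le (by omega), mul_one]
  have hsucc := hsum (j + 1) h
  rw [Finset.sum_range_succ, ← hsum j h.le, Nat.cast_succ] at hsucc
  linarith

theorem coeff_friableLogDeriv_nonneg (m j : ℕ) :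
    0 ≤ PowerSeries.coeff j (friableLogDeriv F m) := by
  rw [friableLogDeriv, PowerSeries.coeff_mk]
  positivity

theorem mangoldtSum_self {d : ℕ} (hd : d ≠ 0) : mangoldtSum F d d = Fintype.card F ^ d := by
  have h := coeff_friableLogDeriv_of_lt (F := F) (Nat.sub_one_lt hd)
  rw [friableLogDeriv, PowerSeries.coeff_mk, Nat.sub_one_add_one hd, div_eq_one_iff_eq
    (pow_ne_zero d (Nat.cast_ne_zero.2 Fintype.card_ne_zero))] at h
  exact_mod_cast h

theorem mangoldtSum_le {m j : ℕ} (h : m < j) :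
    mangoldtSum F m j ≤ 2 * Fintype.card F ^ (j / 2) := by
  have hmaps : ∀ P ∈ (smallPrimes F m).filter (·.natDegree ∣ j),
      P.natDegree ∈ Finset.Icc 1 (j / 2) := by
    intro P hP
    obtain ⟨hPm, k, rfl⟩ := Finset.mem_filter.1 hP
    obtain ⟨-, hirr, hdeg⟩ := mem_smallPrimes.1 hPm
    have hk : 2 ≤ k := by
      by_contra! hk
      exact h.not_ge ((mul_le_of_le_one_right (Nat.zero_le _) (Nat.le_of_lt_succ hk)).trans hdeg)
    exact Finset.mem_Icc.2 ⟨hirr.natDegree_pos, (Nat.le_div_iff_mul_le two_pos).2 (by gcongr)⟩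
  calc mangoldtSum F m j
      = ∑ d ∈ Finset.Icc 1 (j / 2), ∑ P ∈ (smallPrimes F m).filter (·.natDegree ∣ j) with
          P.natDegree = d, P.natDegree := (Finset.sum_fiberwise_of_maps_to hmaps _).symm
    _ ≤ ∑ d ∈ Finset.Icc 1 (j / 2), ∑ P ∈ smallPrimes F m with P.natDegree = d, P.natDegree :=
        Finset.sum_le_sum fun d _ => Finset.sum_le_sum_of_subset
          (Finset.filter_subset_filter _ (Finset.filter_subset _ _))
    _ ≤ ∑ d ∈ Finset.Icc 1 (j / 2), Fintype.card F ^ d := by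
        refine Finset.sum_le_sum fun d hd => (sum_natDegree_smallPrimes_eq_le m d).trans_eq ?_
        exact mangoldtSum_self (Nat.one_le_iff_ne_zero.1 (Finset.mem_Icc.1 hd).1)
    _ ≤ ∑ d ∈ Finset.range (j / 2 + 1), Fintype.card F ^ d :=
        Finset.sum_le_sum_of_subset fun d hd =>
          Finset.mem_range.2 (Nat.lt_succ_of_le (Finset.mem_Icc.1 hd).2)
    _ ≤ 2 * Fintype.card F ^ (j / 2) := by
        rw [Finset.sum_range_succ, two_mul]
        gcongr
        exact (Nat.geomSum_lt Fintype.one_lt_card fun k hk => Finset.mem_range.1 hk).le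

theorem coeff_friableLogDeriv_le {m j : ℕ} (h : m ≤ j) :
    PowerSeries.coeff j (friableLogDeriv F m) ≤ 2 * (√(Fintype.card F : ℝ))⁻¹ ^ (j + 1) := by
  set s := √(Fintype.card F : ℝ)
  have hcard : (Fintype.card F : ℝ) = s ^ 2 := (Real.sq_sqrt (Nat.cast_nonneg _)).symm
  have hs : 1 ≤ s := Real.one_le_sqrt.2 (mod_cast Fintype.one_lt_card.le)
  have hweight : (mangoldtSum F m (j + 1) : ℝ) ≤ 2 * (s ^ 2) ^ ((j + 1) / 2) := by
    rw [← hcard]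
    exact_mod_cast mangoldtSum_le (Nat.lt_succ_of_le h)
  rw [friableLogDeriv, PowerSeries.coeff_mk, div_le_iff₀ (by positivity), hcard, sq, mul_assoc,
    ← mul_pow, inv_mul_cancel_left₀ (by positivity)]
  refine hweight.trans ?_
  rw [← pow_mul]
  gcongr
  exact Nat.mul_div_le _ 2

end PolyProb

/-! ### The Dickman function -/

section RealLemmas

variable {g : ℝ → ℝ} {a b : ℝ}

theorem eq_of_forall_hasDerivAt_zero (hab : a ≤ b) (hc : ContinuousOn g (Set.Icc a b))
    (hd : ∀ t ∈ Set.Ioo a b, HasDerivAt g 0 t) : g b = g a := by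
  rcases hab.eq_or_lt with rfl | hlt
  · rfl
  obtain ⟨t, _, ht⟩ := exists_hasDerivAt_eq_slope g 0 hlt hc hd
  rw [Pi.zero_apply, eq_comm, div_eq_zero_iff] at ht
  linarith [ht.resolve_right (by linarith)]

theorem forall_pos_of_forall_Ico_pos (hc : ContinuousOn g (Set.Ici a))
    (step : ∀ v ≥ a, (∀ w ∈ Set.Ico a v, 0 < g w) → 0 < g v) {v : ℝ} (hv : a ≤ v) : 0 < g v := by
  by_contra! hneg
  let S : Set ℝ := Set.Ici a ∩ g ⁻¹' Set.Iic 0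
  have hS : IsClosed S := hc.preimage_isClosed_of_isClosed isClosed_Ici isClosed_Iic
  have hbdd : BddBelow S := ⟨a, fun x hx => hx.1⟩
  have hmem : sInf S ∈ S := hS.csInf_mem ⟨v, hv, hneg⟩ hbdd
  refine (step _ hmem.1 fun w hw => ?_).not_ge hmem.2
  by_contra! hw'
  exact (csInf_le hbdd ⟨hw.1, hw'⟩).not_gt hw.2

theorem integral_sub_add_eq_integral_add (hg : Continuous g) (x δ : ℝ) :
    ∫ s in (x - δ)..(x + δ), g s = ∫ s in (0 : ℝ)..δ, (g (x + s) + g (x - s)) := by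
  have hint := hg.intervalIntegrable (μ := MeasureTheory.volume)
  rw [intervalIntegral.integral_add (Continuous.intervalIntegrable (by fun_prop) _ _)
      (Continuous.intervalIntegrable (by fun_prop) _ _),
    intervalIntegral.integral_comp_add_left, intervalIntegral.integral_comp_sub_left, add_zero,
    sub_zero, add_comm (∫ s in x..(x + δ), g s),
    intervalIntegral.integral_add_adjacent_intervals (hint _ _) (hint _ _)]

theorem two_mul_mul_le_integral_of_convexOn {x δ : ℝ} (hg : Continuous g)
    (hconv : ConvexOn ℝ (Set.Icc (x - δ) (x + δ)) g) (hδ : 0 ≤ δ) :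
    2 * δ * g x ≤ ∫ s in (x - δ)..(x + δ), g s := by
  have hmid : ∀ s ∈ Set.Icc 0 δ, 2 * g x ≤ g (x + s) + g (x - s) := fun s hs => by
    have := hconv.2 (x := x + s) (y := x - s) ⟨by linarith [hs.1], by linarith [hs.2]⟩
      ⟨by linarith [hs.2], by linarith [hs.1]⟩ one_half_pos.le one_half_pos.le (add_halves 1)
    rw [smul_eq_mul, smul_eq_mul, show 1 / 2 * (x + s) + 1 / 2 * (x - s) = x by ring] at this
    simp only [smul_eq_mul] at this
    linarith
  rw [integral_sub_add_eq_integral_add hg]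
  calc 2 * δ * g x = ∫ _ in (0 : ℝ)..δ, 2 * g x := by
        rw [intervalIntegral.integral_const, smul_eq_mul]; ring
    _ ≤ _ := intervalIntegral.integral_mono_on hδ (by simp)
        (Continuous.intervalIntegrable (by fun_prop) _ _) hmid

end RealLemmas

/-- `R` is the Dickman function, extended by the value `1` to the negative reals, so that
`t R(t) = ∫_{t-1}^t R` makes sense for every `t`. -/
structure IsDickmanExt (R : ℝ → ℝ) : Prop where
  continuous : Continuous R
  pos (t : ℝ) : 0 < R t
  eq_one {t : ℝ} (ht : t ≤ 1) : R t = 1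
  hasDerivAt {t : ℝ} (ht : 1 < t) : HasDerivAt R (-R (t - 1) / t) t

theorem IsDickman.isDickmanExt {ρ : ℝ → ℝ} (h : IsDickman ρ) :
    IsDickmanExt fun t => ρ (max t 0) where
  continuous := h.1.comp_continuous (by fun_prop) fun _ => Set.mem_Ici.2 (le_max_right _ _)
  pos _ := h.2.1 _ (le_max_right _ _)
  eq_one ht := h.2.2.1 _ ⟨le_max_right _ _, max_le ht zero_le_one⟩
  hasDerivAt {t} ht := by
    simp only [max_eq_left (sub_nonneg.2 ht.le)]
    refine (h.2.2.2 t ht).congr_of_eventuallyEq ?_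
    filter_upwards [lt_mem_nhds (zero_lt_one.trans ht)] with s hs
    rw [max_eq_left hs.le]

/-- `κ = -R'/R`, the negated logarithmic derivative of the Dickman function `R`, with `R'`
replaced by the value prescribed by the delay differential equation. -/
noncomputable def negLogDeriv (R : ℝ → ℝ) (x : ℝ) : ℝ := R (x - 1) / (x * R x)

namespace IsDickmanExt

variable {R : ℝ → ℝ} {x v : ℝ}

theorem strictAntiOn (h : IsDickmanExt R) : StrictAntiOn R (Set.Ici 1) := by
  refine strictAntiOn_of_deriv_neg (convex_Ici 1) h.continuous.continuousOn fun x hx => ?_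
  rw [interior_Ici, Set.mem_Ioi] at hx
  rw [(h.hasDerivAt hx).deriv]
  exact div_neg_of_neg_of_pos (neg_neg_of_pos (h.pos _)) (by linarith)

theorem antitone (h : IsDickmanExt R) : Antitone R := by
  have heq : R = fun t => R (max t 1) := by
    ext t
    rcases le_total t 1 with ht | ht
    · rw [max_eq_right ht, h.eq_one ht, h.eq_one le_rfl]
    · rw [max_eq_left ht]
  intro s t hst
  rw [heq]
  exact h.strictAntiOn.antitoneOn (Set.mem_Ici.2 (le_max_right _ _))
    (Set.mem_Ici.2 (le_max_right _ _)) (by gcongr)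

theorem le_one (h : IsDickmanExt R) (t : ℝ) : R t ≤ 1 := by
  rw [← h.eq_one (min_le_right t 1)]
  exact h.antitone (min_le_left _ _)

theorem lt_apply_sub_one (h : IsDickmanExt R) (hx : 1 < x) : R x < R (x - 1) := by
  rcases le_total (x - 1) 1 with hx' | hx'
  · rw [h.eq_one hx', ← h.eq_one le_rfl]
    exact h.strictAntiOn Set.self_mem_Ici hx.le hx
  · exact h.strictAntiOn hx' hx.le (by linarith)

theorem convexOn (h : IsDickmanExt R) : ConvexOn ℝ (Set.Ici 1) R := by
  refine MonotoneOn.convexOn_of_deriv (convex_Ici 1) h.continuous.continuousOn ?_ ?_ <;>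
    rw [interior_Ici]
  · exact fun x hx => (h.hasDerivAt hx).differentiableAt.differentiableWithinAt
  · intro x hx y hy hxy
    rw [(h.hasDerivAt hx).deriv, (h.hasDerivAt hy).deriv, neg_div, neg_div, neg_le_neg_iff]
    exact div_le_div₀ (h.pos _).le (h.antitone (by linarith)) (zero_lt_one.trans hx) hxy

theorem hasDerivAt_id_mul (h : IsDickmanExt R) (hx : 1 < x) :
    HasDerivAt (fun t => t * R t) (R x - R (x - 1)) x := by
  refine ((hasDerivAt_id x).mul (h.hasDerivAt hx)).congr_deriv ?_
  have : x ≠ 0 := by linarith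
  simp only [id]
  field_simp
  ring

theorem mul_eq_integral (h : IsDickmanExt R) (hx : 1 ≤ x) :
    x * R x = ∫ s in (x - 1)..x, R s := by
  have hint := h.continuous.intervalIntegrable (μ := MeasureTheory.volume)
  let I : ℝ → ℝ := fun t => ∫ s in (0 : ℝ)..t, R s
  have hI : ∀ t, HasDerivAt I (R t) t := fun t =>
    intervalIntegral.integral_hasDerivAt_right (hint _ _)
      h.continuous.stronglyMeasurable.stronglyMeasurableAtFilter h.continuous.continuousAt
  have hIc : Continuous I := continuous_iff_continuousAt.2 fun t => (hI t).continuousAt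
  have hwindow : ∫ s in (x - 1)..x, R s = I x - I (x - 1) :=
    (intervalIntegral.integral_interval_sub_left (hint _ _) (hint _ _)).symm
  have hI1 : I 1 = 1 := by
    have : I 1 = ∫ _ in (0 : ℝ)..1, (1 : ℝ) := intervalIntegral.integral_congr fun s hs => by
      rw [Set.uIcc_of_le zero_le_one] at hs
      exact h.eq_one hs.2
    simp [this]
  have hRc := h.continuous
  have hconst := eq_of_forall_hasDerivAt_zero (g := fun t => t * R t - (I t - I (t - 1))) hx
    (by fun_prop) fun t ht => ((h.hasDerivAt_id_mul ht.1).sub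
      ((hI t).sub ((hI (t - 1)).comp_sub_const t 1))).congr_deriv (sub_self _)
  have hI0 : I 0 = 0 := intervalIntegral.integral_same
  simp only [h.eq_one le_rfl, sub_self, hI0, hI1] at hconst
  linarith

theorem eq_one_sub_log (h : IsDickmanExt R) (hx : x ∈ Set.Icc 1 2) : R x = 1 - log x := by
  have hlog : ContinuousOn log (Set.Icc 1 x) :=
    continuousOn_log.mono fun t ht => (zero_lt_one.trans_le ht.1).ne'
  have hconst := eq_of_forall_hasDerivAt_zero (g := fun t => R t + log t) hx.1
    (h.continuous.continuousOn.add hlog) fun t ht => by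
      have ht₀ : t ≠ 0 := by linarith [ht.1]
      refine ((h.hasDerivAt ht.1).add (hasDerivAt_log ht₀)).congr_deriv ?_
      rw [h.eq_one (by linarith [ht.2, hx.2]), neg_div, one_div, neg_add_cancel]
  rw [h.eq_one le_rfl, log_one, add_zero] at hconst
  linarith

theorem negLogDeriv_pos (h : IsDickmanExt R) (hx : 1 ≤ x) : 0 < negLogDeriv R x :=
  div_pos (h.pos _) (mul_pos (zero_lt_one.trans_le hx) (h.pos x))

theorem continuousOn_negLogDeriv (h : IsDickmanExt R) :
    ContinuousOn (negLogDeriv R) (Set.Ici 1) := by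
  have := h.continuous
  refine ContinuousOn.div (by fun_prop) (by fun_prop) fun x hx => ?_
  exact (mul_pos (zero_lt_one.trans_le hx) (h.pos x)).ne'

theorem hasDerivAt_negLogDeriv_mul (h : IsDickmanExt R) (hx : 1 < x) :
    HasDerivAt R (-(negLogDeriv R x * R x)) x := by
  refine (h.hasDerivAt hx).congr_deriv ?_
  have := (h.pos x).ne'
  have : x ≠ 0 := by linarith
  rw [negLogDeriv]
  field_simp

theorem strictMonoOn_negLogDeriv_Icc (h : IsDickmanExt R) :
    StrictMonoOn (negLogDeriv R) (Set.Icc 1 2) := by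
  have hanti : StrictAntiOn (fun x => x * R x) (Set.Ici 1) := by
    have := h.continuous
    refine strictAntiOn_of_deriv_neg (convex_Ici 1) (by fun_prop) fun x hx => ?_
    rw [interior_Ici, Set.mem_Ioi] at hx
    rw [(h.hasDerivAt_id_mul hx).deriv]
    exact sub_neg.2 (h.lt_apply_sub_one hx)
  intro x hx y hy hxy
  rw [negLogDeriv, negLogDeriv, h.eq_one (t := x - 1) (by linarith [hx.2]),
    h.eq_one (t := y - 1) (by linarith [hy.2])]
  exact one_div_lt_one_div_of_lt (mul_pos (zero_lt_one.trans_le hy.1) (h.pos y))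
    (hanti hx.1 hy.1 hxy)

theorem hasDerivAt_negLogDeriv (h : IsDickmanExt R) (hv : 2 < v) :
    HasDerivAt (negLogDeriv R)
      (negLogDeriv R v * (negLogDeriv R v - negLogDeriv R (v - 1) - 1 / v)) v := by
  have hR := h.pos v
  have hR' := h.pos (v - 1)
  have hv₀ : 0 < v := by linarith
  have hv₁ : 0 < v - 1 := by linarith
  have hnum := (h.hasDerivAt (t := v - 1) (by linarith)).comp_sub_const v 1
  have hden := h.hasDerivAt_id_mul (x := v) (by linarith)
  refine (hnum.div hden (mul_pos hv₀ hR).ne').congr_deriv ?_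
  simp only [negLogDeriv]
  field_simp
  ring

-- `κ(v) - 1/v` is the average of `κ` over `[v-1, v]` with weight `R`.
theorem negLogDeriv_gap_pos_of_strictMonoOn (h : IsDickmanExt R) (hv : 2 ≤ v)
    (hmono : StrictMonoOn (negLogDeriv R) (Set.Icc 1 v)) :
    0 < negLogDeriv R v - negLogDeriv R (v - 1) - 1 / v := by
  have : 0 < v := by linarith
  have hR := h.pos v
  have hRc := h.continuous
  have hcont : ContinuousOn (fun x => negLogDeriv R x * R x) (Set.Icc (v - 1) v) :=
    (h.continuousOn_negLogDeriv.mono fun x hx => by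
      simp only [Set.mem_Ici]; linarith [hx.1]).mul hRc.continuousOn
  have hftc : ∫ x in (v - 1)..v, negLogDeriv R x * R x = R (v - 1) - R v := by
    have := intervalIntegral.integral_eq_sub_of_hasDerivAt_of_le (by linarith : v - 1 ≤ v)
      hRc.continuousOn
      (fun x hx => h.hasDerivAt_negLogDeriv_mul (by linarith [hx.1]))
      (hcont.neg.intervalIntegrable_of_Icc (by linarith))
    rw [intervalIntegral.integral_neg] at this
    linarith
  have hlt : ∫ x in (v - 1)..v, negLogDeriv R (v - 1) * R x <
      ∫ x in (v - 1)..v, negLogDeriv R x * R x := by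
    refine intervalIntegral.integral_lt_integral_of_continuousOn_of_le_of_exists_lt (by linarith)
      (by fun_prop) hcont (fun x hx => ?_) ⟨v, ⟨by linarith, le_rfl⟩, ?_⟩
    · exact mul_le_mul_of_nonneg_right (hmono.monotoneOn ⟨by linarith, by linarith⟩
        ⟨by linarith [hx.1], hx.2⟩ hx.1.le) (h.pos x).le
    · exact mul_lt_mul_of_pos_right (hmono ⟨by linarith, by linarith⟩ ⟨by linarith, le_rfl⟩
        (by linarith)) hR
  rw [intervalIntegral.integral_const_mul, ← h.mul_eq_integral (by linarith), hftc,
    ← lt_div_iff₀ (by positivity)] at hlt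
  have hkey : negLogDeriv R v - 1 / v = (R (v - 1) - R v) / (v * R v) := by
    rw [negLogDeriv]; field_simp
  linarith

theorem strictMonoOn_negLogDeriv_of_gap_pos (h : IsDickmanExt R) {S : Set ℝ} (hS : Convex ℝ S)
    (hS₂ : S ⊆ Set.Ici 2)
    (hgap : ∀ w ∈ interior S, 0 < negLogDeriv R w - negLogDeriv R (w - 1) - 1 / w) :
    StrictMonoOn (negLogDeriv R) S := by
  have hint : ∀ w ∈ interior S, 2 < w := fun w hw => by
    have := interior_mono hS₂ hw
    rwa [interior_Ici] at this
  refine strictMonoOn_of_deriv_pos hS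
    (h.continuousOn_negLogDeriv.mono (hS₂.trans (Set.Ici_subset_Ici.2 one_le_two)))
    fun w hw => ?_
  rw [(h.hasDerivAt_negLogDeriv (hint w hw)).deriv]
  exact mul_pos (h.negLogDeriv_pos (by linarith [hint w hw])) (hgap w hw)

theorem negLogDeriv_gap_pos (h : IsDickmanExt R) (hv : 2 ≤ v) :
    0 < negLogDeriv R v - negLogDeriv R (v - 1) - 1 / v := by
  have hκ := h.continuousOn_negLogDeriv
  refine forall_pos_of_forall_Ico_pos
    (g := fun w => negLogDeriv R w - negLogDeriv R (w - 1) - 1 / w) (a := 2) ?_ ?_ hv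
  · refine ((hκ.mono (Set.Ici_subset_Ici.2 one_le_two)).sub
      (hκ.comp (by fun_prop) fun w hw => ?_)).sub
      (continuousOn_const.div continuousOn_id fun w hw => ?_)
    · simp only [Set.mem_Ici] at hw ⊢; linarith
    · exact (zero_lt_two.trans_le hw).ne'
  · intro w hw hpos
    refine h.negLogDeriv_gap_pos_of_strictMonoOn hw ?_
    rw [← Set.Icc_union_Icc_eq_Icc one_le_two hw]
    refine h.strictMonoOn_negLogDeriv_Icc.union (h.strictMonoOn_negLogDeriv_of_gap_pos
      (convex_Icc 2 w) Set.Icc_subset_Ici_self fun t ht => ?_)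
      (isGreatest_Icc one_le_two) (isLeast_Icc hw)
    rw [interior_Icc] at ht
    exact hpos t ⟨ht.1.le, ht.2⟩

theorem strictMonoOn_negLogDeriv (h : IsDickmanExt R) :
    StrictMonoOn (negLogDeriv R) (Set.Ici 1) := by
  rw [← Set.Icc_union_Ici_eq_Ici one_le_two]
  refine h.strictMonoOn_negLogDeriv_Icc.union (h.strictMonoOn_negLogDeriv_of_gap_pos
    (convex_Ici 2) subset_rfl fun w hw => ?_) (isGreatest_Icc one_le_two) isLeast_Ici
  exact h.negLogDeriv_gap_pos (interior_subset hw)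

theorem log_sub_log_le (h : IsDickmanExt R) {s : ℝ} (hx : 1 ≤ x) (hs : 1 ≤ s) :
    log (R s) - log (R x) ≤ -negLogDeriv R x * (s - x) := by
  have hmono := h.strictMonoOn_negLogDeriv.monotoneOn
  have hc : Continuous fun t => log (R t) := h.continuous.log fun t => (h.pos t).ne'
  have hd : ∀ t, 1 < t → HasDerivAt (fun t => log (R t)) (-negLogDeriv R t) t := fun t ht =>
    ((h.hasDerivAt_negLogDeriv_mul ht).log (h.pos t).ne').congr_deriv
      (by rw [neg_div, mul_div_cancel_right₀ _ (h.pos t).ne'])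
  rcases lt_trichotomy x s with hlt | rfl | hlt
  · obtain ⟨t, ht, heq⟩ := exists_hasDerivAt_eq_slope _ _ hlt hc.continuousOn
      fun t ht => hd t (hx.trans_lt ht.1)
    rw [eq_div_iff (by linarith)] at heq
    rw [← heq]
    exact mul_le_mul_of_nonneg_right
      (neg_le_neg (hmono hx (hx.trans ht.1.le) ht.1.le)) (by linarith)
  · simp
  · obtain ⟨t, ht, heq⟩ := exists_hasDerivAt_eq_slope _ _ hlt hc.continuousOn
      fun t ht => hd t (hs.trans_lt ht.1)
    rw [eq_div_iff (by linarith)] at heq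
    have := mul_le_mul_of_nonneg_right (hmono (hs.trans ht.1.le) hx ht.2.le)
      (by linarith : 0 ≤ x - s)
    linarith

theorem le_mul_exp (h : IsDickmanExt R) (hx : 1 ≤ x) (s : ℝ) :
    R s ≤ R x * exp (-negLogDeriv R x * (s - x)) := by
  suffices hlog : log (R s) ≤ log (R x) + -negLogDeriv R x * (s - x) by
    calc R s = exp (log (R s)) := (exp_log (h.pos s)).symm
      _ ≤ exp (log (R x) + -negLogDeriv R x * (s - x)) := exp_le_exp.2 hlog
      _ = _ := by rw [exp_add, exp_log (h.pos x)]
  rcases le_total 1 s with hs | hs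
  · linarith [h.log_sub_log_le hx hs]
  · have h₁ := h.log_sub_log_le hx le_rfl
    rw [h.eq_one le_rfl] at h₁
    rw [h.eq_one hs]
    nlinarith [h.negLogDeriv_pos hx]

theorem exp_mul_negLogDeriv_le (h : IsDickmanExt R) {θ : ℝ} (hx : 1 ≤ x) (hθ₀ : 0 < θ)
    (hθ₁ : θ < 1) : exp (θ * negLogDeriv R x) ≤ (x + θ) / (1 - θ) := by
  have hint := h.continuous.intervalIntegrable (μ := MeasureTheory.volume)
  have hlower : (1 - θ) * R x ≤ (x + θ) * R (x + θ) := by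
    have hleft : ∫ _ in (x + θ - 1)..x, R x ≤ ∫ s in (x + θ - 1)..x, R s :=
      intervalIntegral.integral_mono_on (by linarith) (by simp) (hint _ _)
        fun s hs => h.antitone hs.2
    have hright : 0 ≤ ∫ s in x..(x + θ), R s :=
      intervalIntegral.integral_nonneg (by linarith) fun s _ => (h.pos s).le
    rw [intervalIntegral.integral_const, smul_eq_mul] at hleft
    rw [h.mul_eq_integral (by linarith),
      ← intervalIntegral.integral_add_adjacent_intervals (hint _ x) (hint x _)]
    linarith
  have htangent : R (x + θ) * exp (θ * negLogDeriv R x) ≤ R x := by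
    have := h.le_mul_exp hx (x + θ)
    rwa [show -negLogDeriv R x * (x + θ - x) = -(θ * negLogDeriv R x) by ring, exp_neg,
      ← div_eq_mul_inv, le_div_iff₀ (exp_pos _)] at this
  rw [le_div_iff₀ (by linarith)]
  refine le_of_mul_le_mul_right ?_ (h.pos x)
  calc exp (θ * negLogDeriv R x) * (1 - θ) * R x
      = exp (θ * negLogDeriv R x) * ((1 - θ) * R x) := by ring
    _ ≤ exp (θ * negLogDeriv R x) * ((x + θ) * R (x + θ)) := by gcongr
    _ = (x + θ) * (R (x + θ) * exp (θ * negLogDeriv R x)) := by ring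
    _ ≤ (x + θ) * R x := by gcongr

theorem negLogDeriv_le (h : IsDickmanExt R) {u : ℝ} (hx : 1 ≤ x) (hxu : x ≤ u) :
    negLogDeriv R x ≤ 4 * log (u + 1) := by
  have hexp := h.exp_mul_negLogDeriv_le hx one_half_pos one_half_lt_one
  rw [← le_log_iff_exp_le (by norm_num; linarith)] at hexp
  have hlog : log ((x + 1 / 2) / (1 - 1 / 2)) ≤ log ((u + 1) ^ 2) :=
    log_le_log (by norm_num; linarith) (by norm_num; nlinarith)
  rw [log_pow] at hlog
  push_cast at hlog
  linarith

theorem two_mul_mul_le_integral (h : IsDickmanExt R) {δ : ℝ} (hδ : 0 ≤ δ) (hx : 1 ≤ x - δ) :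
    2 * δ * R x ≤ ∫ s in (x - δ)..(x + δ), R s :=
  two_mul_mul_le_integral_of_convexOn h.continuous
    (h.convexOn.subset (fun _ hs => hx.trans hs.1) (convex_Icc _ _)) hδ

theorem add_le_two_mul_cosh (h : IsDickmanExt R) (hx : 1 ≤ x) (s : ℝ) :
    R (x + s) + R (x - s) ≤ 2 * (R x * cosh (negLogDeriv R x * s)) := by
  have hadd := h.le_mul_exp hx (x + s)
  have hsub := h.le_mul_exp hx (x - s)
  rw [show -negLogDeriv R x * (x + s - x) = -(negLogDeriv R x * s) by ring] at hadd
  rw [show -negLogDeriv R x * (x - s - x) = negLogDeriv R x * s by ring] at hsub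
  rw [cosh_eq]
  linarith

theorem integral_le_two_mul_mul_exp (h : IsDickmanExt R) {δ K : ℝ} (hδ : 0 ≤ δ) (hK₀ : 0 ≤ K)
    (hK : 1 ≤ x → negLogDeriv R x ≤ K) :
    ∫ s in (x - δ)..(x + δ), R s ≤ 2 * δ * (R x * exp ((K * δ) ^ 2 / 2)) := by
  have hR := h.pos x
  have hRc := h.continuous
  have hpair : ∀ s ∈ Set.Icc 0 δ, R (x + s) + R (x - s) ≤ 2 * (R x * exp ((K * δ) ^ 2 / 2)) := by
    rintro s ⟨hs₀, hs⟩
    rcases le_total 1 x with hx | hx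
    · have := h.negLogDeriv_pos hx
      calc R (x + s) + R (x - s) ≤ 2 * (R x * cosh (negLogDeriv R x * s)) :=
            h.add_le_two_mul_cosh hx s
        _ ≤ 2 * (R x * exp ((negLogDeriv R x * s) ^ 2 / 2)) := by
            gcongr; exact cosh_le_exp_half_sq _
        _ ≤ 2 * (R x * exp ((K * δ) ^ 2 / 2)) := by gcongr; exact hK hx
    · have : 1 ≤ exp ((K * δ) ^ 2 / 2) := one_le_exp (by positivity)
      rw [h.eq_one hx]
      linarith [h.le_one (x + s), h.le_one (x - s)]
  rw [integral_sub_add_eq_integral_add hRc]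
  calc _ ≤ ∫ _ in (0 : ℝ)..δ, 2 * (R x * exp ((K * δ) ^ 2 / 2)) :=
        intervalIntegral.integral_mono_on hδ (Continuous.intervalIntegrable (by fun_prop) _ _)
          (by simp) hpair
    _ = _ := by rw [intervalIntegral.integral_const, smul_eq_mul]; ring

theorem integral_sub_le_mul_exp (h : IsDickmanExt R) {δ : ℝ} (hx : 1 ≤ x) (hδ : 0 ≤ δ) :
    ∫ s in (x - δ)..x, R s ≤ δ * (R x * exp (negLogDeriv R x * δ)) := by
  have hpt : ∀ s ∈ Set.Icc (x - δ) x, R s ≤ R x * exp (negLogDeriv R x * δ) := fun s hs => by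
    refine (h.le_mul_exp hx s).trans (mul_le_mul_of_nonneg_left (exp_le_exp.2 ?_) (h.pos x).le)
    nlinarith [h.negLogDeriv_pos hx, hs.1]
  calc _ ≤ ∫ _ in (x - δ)..x, R x * exp (negLogDeriv R x * δ) :=
        intervalIntegral.integral_mono_on (by linarith) (h.continuous.intervalIntegrable _ _)
          (by simp) hpt
    _ = _ := by rw [intervalIntegral.integral_const, smul_eq_mul]; ring

theorem mul_le_integral_sub (h : IsDickmanExt R) {δ : ℝ} (hδ : 0 ≤ δ) :
    δ * R x ≤ ∫ s in (x - δ)..x, R s :=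
  calc δ * R x = ∫ _ in (x - δ)..x, R x := by
        rw [intervalIntegral.integral_const, smul_eq_mul]; ring
    _ ≤ _ := intervalIntegral.integral_mono_on (by linarith) (by simp)
        (h.continuous.intervalIntegrable _ _) fun s hs => h.antitone hs.2

end IsDickmanExt

/-! ### Comparison of a window recurrence with the Dickman function -/

/-- The grid of spacing `2/(2m+1)` on which the sequence `n ↦ p n` is compared with the Dickman
function: its points are the midpoints of the cells `[2n/(2m+1), (2n+2)/(2m+1)]`, and the `m`-th
one is `1`, where the Dickman function leaves the value `1`. -/
noncomputable def midGrid (m n : ℕ) : ℝ := (2 * n + 1) / (2 * m + 1)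

section MidGrid

variable {m n : ℕ}

theorem one_le_midGrid (h : m ≤ n) : 1 ≤ midGrid m n := by
  have : (m : ℝ) ≤ n := by exact_mod_cast h
  rw [midGrid, le_div_iff₀ (by positivity)]
  linarith

theorem midGrid_le_one (h : n ≤ m) : midGrid m n ≤ 1 := by
  have : (n : ℝ) ≤ m := by exact_mod_cast h
  rw [midGrid, div_le_iff₀ (by positivity)]
  linarith

theorem monotone_midGrid (m : ℕ) : Monotone (midGrid m) := fun a b h => by
  unfold midGrid
  gcongr

theorem midGrid_le_div (hm : 0 < m) (h : m ≤ n) : midGrid m n ≤ n / m := by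
  have h₁ : (m : ℝ) ≤ n := by exact_mod_cast h
  rw [midGrid, div_le_div_iff₀ (by positivity) (by positivity)]
  linarith

end MidGrid

theorem natCast_mul_exp_le_sum_exp (m : ℕ) (α : ℝ) :
    m * exp (α * m / 2 + α / 2) ≤ ∑ k ∈ Finset.range m, exp (α * (m - k)) := by
  have hsum : ∑ k ∈ Finset.range m, ((m : ℝ) - k) = m * (m + 1) / 2 := by
    induction m with
    | zero => simp
    | succ m ih =>
      rw [Finset.sum_range_succ']
      push_cast
      simp only [add_sub_add_right_eq_sub, ih]
      ring
  set c := α * m / 2 + α / 2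
  calc m * exp c = exp c * ∑ k ∈ Finset.range m, (α * ((m : ℝ) - k) - c + 1) := by
        rw [Finset.sum_add_distrib, Finset.sum_sub_distrib, ← Finset.mul_sum, hsum]
        simp only [Finset.sum_const, Finset.card_range, nsmul_eq_mul, c]
        ring
    _ ≤ exp c * ∑ k ∈ Finset.range m, exp (α * (m - k) - c) := by
        gcongr with k
        exact add_one_le_exp _
    _ = _ := by
        rw [Finset.mul_sum]
        refine Finset.sum_congr rfl fun k _ => ?_
        rw [← exp_add, add_sub_cancel]

-- Chebyshev's sum inequality.
theorem exp_mul_sum_le_sum_mul_exp {r : ℕ → ℝ} (hr : Antitone r) (hr₀ : ∀ k, 0 ≤ r k) (m : ℕ)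
    {α : ℝ} (hα : 0 ≤ α) :
    exp (α * m / 2) * ∑ k ∈ Finset.range m, r k ≤
      ∑ k ∈ Finset.range m, r k * exp (α * (m - k)) := by
  rcases Nat.eq_zero_or_pos m with rfl | hm
  · simp
  have hmono : MonovaryOn r (fun k : ℕ => exp (α * (m - k))) (Finset.range m) :=
    (hr.monovary fun i j hij => by gcongr).monovaryOn _
  have hcheb := hmono.sum_mul_sum_le_card_mul_sum
  rw [Finset.card_range] at hcheb
  have hsum : 0 ≤ ∑ k ∈ Finset.range m, r k := Finset.sum_nonneg fun k _ => hr₀ k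
  refine le_of_mul_le_mul_left ?_ (Nat.cast_pos (α := ℝ).2 hm)
  calc m * (exp (α * m / 2) * ∑ k ∈ Finset.range m, r k)
      = (∑ k ∈ Finset.range m, r k) * (m * exp (α * m / 2)) := by ring
    _ ≤ (∑ k ∈ Finset.range m, r k) * (m * exp (α * m / 2 + α / 2)) := by
        gcongr; linarith
    _ ≤ (∑ k ∈ Finset.range m, r k) * ∑ k ∈ Finset.range m, exp (α * (m - k)) := by
        gcongr; exact natCast_mul_exp_le_sum_exp m α
    _ ≤ _ := hcheb

theorem mul_exp_neg_nine_mul_sq_le {x y : ℝ} (hx : 0 < x) (hxy : 1 ≤ 3 * x * y)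
    (hexp : exp x ≤ y + 1) : y * exp (-(9 * x ^ 2)) ≤ y - (exp x - 1) / 2 := by
  have hy : 0 < y := by linarith [add_one_le_exp x]
  rcases le_total x (1 / 3) with hx₃ | hx₃
  · have hlin : exp x - 1 ≤ 2 * x := by
      have := abs_exp_sub_one_le (x := x) (by rw [abs_of_pos hx]; linarith)
      rw [abs_of_pos hx] at this
      exact (le_abs_self _).trans this
    have hinv : exp (-(9 * x ^ 2)) ≤ 1 - 3 * x ^ 2 := by
      rw [exp_neg]
      refine (inv_anti₀ (by positivity) (add_one_le_exp (9 * x ^ 2))).trans ?_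
      rw [inv_le_iff_one_le_mul₀ (by positivity)]
      nlinarith [show x ^ 2 ≤ 1 / 9 by nlinarith, sq_nonneg x]
    calc y * exp (-(9 * x ^ 2)) ≤ y * (1 - 3 * x ^ 2) := by gcongr
      _ ≤ y - (exp x - 1) / 2 := by nlinarith
  · have hhalf : exp (-(9 * x ^ 2)) ≤ 1 / 2 := by
      rw [exp_neg, one_div]
      exact inv_anti₀ two_pos (by nlinarith [add_one_le_exp (9 * x ^ 2)])
    calc y * exp (-(9 * x ^ 2)) ≤ y * (1 / 2) := by gcongr
      _ ≤ y - (exp x - 1) / 2 := by linarith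

namespace IsDickmanExt

variable {R : ℝ → ℝ} {m n : ℕ}

theorem sum_integral_cell (h : IsDickmanExt R) (hmn : m ≤ n) :
    ∑ k ∈ Finset.range m, ∫ s in (midGrid m (n - m + k) - 1 / (2 * m + 1))..
      (midGrid m (n - m + k) + 1 / (2 * m + 1)), R s =
    ∫ s in (midGrid m n - 1)..(midGrid m n - 1 / (2 * m + 1)), R s := by
  have hsum := intervalIntegral.sum_integral_adjacent_intervals (f := R)
    (μ := MeasureTheory.volume) (n := m)
    (a := fun k : ℕ => 2 * ((n : ℝ) - m + k) / (2 * m + 1))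
    (fun k _ => h.continuous.intervalIntegrable _ _)
  have hfirst : 2 * ((n : ℝ) - m + (0 : ℕ)) / (2 * m + 1) = midGrid m n - 1 := by
    rw [midGrid]; push_cast; field_simp; ring
  have hlast : 2 * ((n : ℝ) - m + m) / (2 * m + 1) = midGrid m n - 1 / (2 * m + 1) := by
    rw [midGrid]; field_simp; ring
  rw [hfirst, hlast] at hsum
  rw [← hsum]
  refine Finset.sum_congr rfl fun k _ => ?_
  congr 1 <;> simp only [midGrid] <;> push_cast [hmn] <;> field_simp <;> ring

theorem two_mul_mul_add_eq_integral_add (h : IsDickmanExt R) (hmn : m ≤ n) :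
    2 * (1 / (2 * m + 1)) * (n * R (midGrid m n)) + 1 / (2 * m + 1) * R (midGrid m n) =
      (∫ s in (midGrid m n - 1)..(midGrid m n - 1 / (2 * m + 1)), R s) +
        ∫ s in (midGrid m n - 1 / (2 * m + 1))..(midGrid m n), R s := by
  rw [intervalIntegral.integral_add_adjacent_intervals (h.continuous.intervalIntegrable _ _)
    (h.continuous.intervalIntegrable _ _), ← h.mul_eq_integral (one_le_midGrid hmn), midGrid]
  ring

theorem sum_midGrid_le (h : IsDickmanExt R) (hmn : 2 * m + 1 ≤ n) :
    ∑ k ∈ Finset.range m, R (midGrid m (n - m + k)) ≤ n * R (midGrid m n) := by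
  have hmn' : m ≤ n := by lia
  set δ : ℝ := 1 / (2 * m + 1)
  have hδ₀ : 0 < δ := by positivity
  have hcells : 2 * δ * ∑ k ∈ Finset.range m, R (midGrid m (n - m + k)) ≤
      ∫ s in (midGrid m n - 1)..(midGrid m n - δ), R s := by
    rw [← h.sum_integral_cell hmn', Finset.mul_sum]
    refine Finset.sum_le_sum fun k _ => h.two_mul_mul_le_integral hδ₀.le ?_
    have : (2 * (m : ℝ) + 1) ≤ n := by exact_mod_cast hmn
    have : (0 : ℝ) ≤ k := k.cast_nonneg
    rw [midGrid, ← sub_div, le_div_iff₀ (by positivity)]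
    push_cast [hmn']
    linarith
  have hhalf := h.mul_le_integral_sub (x := midGrid m n) hδ₀.le
  refine le_of_mul_le_mul_left ?_ (mul_pos two_pos hδ₀)
  linarith [h.two_mul_mul_add_eq_integral_add hmn']

theorem mul_sub_le_exp_mul_sum_midGrid (h : IsDickmanExt R) (hmn : m ≤ n) :
    R (midGrid m n) * (n - (exp (negLogDeriv R (midGrid m n) / (2 * m + 1)) - 1) / 2) ≤
      exp ((negLogDeriv R (midGrid m n) / (2 * m + 1)) ^ 2 / 2) *
        ∑ k ∈ Finset.range m, R (midGrid m (n - m + k)) := by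
  have hw := one_le_midGrid hmn
  have hwindow := h.two_mul_mul_add_eq_integral_add hmn
  set w := midGrid m n
  set κ := negLogDeriv R w
  set δ : ℝ := 1 / (2 * m + 1) with hδ
  have hδ₀ : 0 < δ := by positivity
  rw [show κ / (2 * m + 1) = κ * δ by rw [hδ]; ring]
  have hcells : ∫ s in (w - 1)..(w - δ), R s ≤
      2 * δ * (exp ((κ * δ) ^ 2 / 2) * ∑ k ∈ Finset.range m, R (midGrid m (n - m + k))) := by
    rw [← h.sum_integral_cell hmn, ← mul_assoc, Finset.mul_sum]
    refine Finset.sum_le_sum fun k hk => ?_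
    rw [Finset.mem_range] at hk
    refine (h.integral_le_two_mul_mul_exp hδ₀.le (h.negLogDeriv_pos hw).le fun hk₁ =>
      h.strictMonoOn_negLogDeriv.monotoneOn hk₁ hw
        (monotone_midGrid m (by lia))).trans_eq ?_
    ring
  have hhalf := h.integral_sub_le_mul_exp hw hδ₀.le
  refine le_of_mul_le_mul_left ?_ (mul_pos two_pos hδ₀)
  linarith

theorem negLogDeriv_midGrid_div_le_log (h : IsDickmanExt R) (hm : 2 ≤ m) (hmn : m ≤ n) :
    negLogDeriv R (midGrid m n) / (2 * m + 1) ≤ log (n + 1) := by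
  have hm' : (2 : ℝ) ≤ m := by exact_mod_cast hm
  have hκ := h.negLogDeriv_le (one_le_midGrid hmn) (midGrid_le_div (by lia) hmn)
  have hlog : log ((n : ℝ) / m + 1) ≤ log (n + 1) := by
    gcongr
    exact div_le_self n.cast_nonneg (by linarith)
  have hlog₀ : 0 ≤ log ((n : ℝ) + 1) := log_nonneg (by linarith [n.cast_nonneg (α := ℝ)])
  rw [div_le_iff₀ (by positivity)]
  nlinarith

theorem negLogDeriv_one (h : IsDickmanExt R) : negLogDeriv R 1 = 1 := by
  rw [negLogDeriv, h.eq_one le_rfl, h.eq_one (by norm_num)]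
  norm_num

theorem mul_exp_le_sum_midGrid (h : IsDickmanExt R) (hm : 2 ≤ m) (hmn : m ≤ n) :
    n * R (midGrid m n) * exp (-(10 * (negLogDeriv R (midGrid m n) / (2 * m + 1)) ^ 2)) ≤
      ∑ k ∈ Finset.range m, R (midGrid m (n - m + k)) := by
  have hm' : (2 : ℝ) ≤ m := by exact_mod_cast hm
  have hmn' : (m : ℝ) ≤ n := by exact_mod_cast hmn
  have hw := one_le_midGrid hmn
  have hκ₁ : 1 ≤ negLogDeriv R (midGrid m n) := by
    rw [← h.negLogDeriv_one]
    exact h.strictMonoOn_negLogDeriv.monotoneOn Set.self_mem_Ici hw hw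
  have hsum := h.mul_sub_le_exp_mul_sum_midGrid hmn
  have hexp := h.negLogDeriv_midGrid_div_le_log hm hmn
  rw [le_log_iff_exp_le (by positivity)] at hexp
  set x := negLogDeriv R (midGrid m n) / (2 * m + 1) with hx
  set S := ∑ k ∈ Finset.range m, R (midGrid m (n - m + k))
  have hx₀ : 0 < x := by positivity
  have hxn : 1 ≤ 3 * x * n := by
    rw [hx, mul_div_assoc', div_mul_eq_mul_div, le_div_iff₀ (by positivity)]
    nlinarith
  have hR := h.pos (midGrid m n)
  have hS : R (midGrid m n) * (n * exp (-(9 * x ^ 2))) ≤ exp (x ^ 2 / 2) * S :=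
    le_trans (by gcongr; exact mul_exp_neg_nine_mul_sq_le hx₀ hxn hexp) hsum
  calc n * R (midGrid m n) * exp (-(10 * x ^ 2))
      ≤ n * R (midGrid m n) * exp (-(x ^ 2 / 2) + -(9 * x ^ 2)) := by
        gcongr; nlinarith [sq_nonneg x]
    _ = exp (-(x ^ 2 / 2)) * (R (midGrid m n) * (n * exp (-(9 * x ^ 2)))) := by
        rw [exp_add]; ring
    _ ≤ exp (-(x ^ 2 / 2)) * (exp (x ^ 2 / 2) * S) := by gcongr
    _ = S := by rw [← mul_assoc, ← exp_add, neg_add_cancel, exp_zero, one_mul]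

end IsDickmanExt

section WindowRecurrence

variable {m n : ℕ} {p : ℕ → ℝ}

theorem succ_eq_sub_div_of_window
    (hp : ∀ n : ℕ, m ≤ n → (n : ℝ) * p n = ∑ k ∈ Finset.range m, p (n - m + k)) (hmn : m ≤ n) :
    p (n + 1) = p n - p (n - m) / (n + 1) := by
  have hshift : ∑ k ∈ Finset.range m, p (n + 1 - m + k) + p (n - m) =
      ∑ k ∈ Finset.range m, p (n - m + k) + p n := by
    have hleft := Finset.sum_range_succ' (fun k => p (n - m + k)) m
    rw [Finset.sum_range_succ, Nat.sub_add_cancel hmn] at hleft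
    simp only [hleft, add_zero, ← add_assoc, Nat.sub_add_comm hmn, Nat.add_right_comm _ 1]
  have hn := hp n hmn
  have hn₁ := hp (n + 1) (by lia)
  push_cast at hn₁
  field_simp
  linarith

theorem le_one_sub_log_of_window (hp₁ : ∀ n ≤ m, p n = 1)
    (hp : ∀ n : ℕ, m ≤ n → (n : ℝ) * p n = ∑ k ∈ Finset.range m, p (n - m + k))
    (hmn : m ≤ n) (hn : n ≤ 2 * m) : p n ≤ 1 - log ((n + 1) / (m + 1)) := by
  induction n, hmn using Nat.le_induction with
  | base => rw [hp₁ m le_rfl, div_self (by positivity), log_one, sub_zero]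
  | succ n hmn ih =>
    have hlog :
        log (((n : ℝ) + 1 + 1) / (m + 1)) ≤ log (((n : ℝ) + 1) / (m + 1)) + 1 / (n + 1) := by
      have hone := log_le_sub_one_of_pos (show (0 : ℝ) < 1 + 1 / (n + 1) by positivity)
      rw [show ((n : ℝ) + 1 + 1) / (m + 1) = (n + 1) / (m + 1) * (1 + 1 / (n + 1)) by field_simp,
        log_mul (by positivity) (by positivity)]
      linarith
    rw [succ_eq_sub_div_of_window hp hmn, hp₁ (n - m) (by lia)]
    push_cast
    linarith [ih (by lia)]

end WindowRecurrence

namespace IsDickmanExt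

variable {R : ℝ → ℝ} {m n N : ℕ} {p : ℕ → ℝ}

theorem one_sub_log_le_mul_midGrid (h : IsDickmanExt R) (hmn : m ≤ n) (hn : n ≤ 2 * m) :
    1 - log ((n + 1) / (m + 1)) ≤ (1 + 4 / (2 * m + 1)) * R (midGrid m n) := by
  have hw₁ := one_le_midGrid hmn
  have hw₂ : midGrid m n ≤ 2 := by
    have : (n : ℝ) ≤ 2 * m := by exact_mod_cast hn
    rw [midGrid, div_le_iff₀ (by positivity)]
    linarith
  have hR := h.eq_one_sub_log ⟨hw₁, hw₂⟩
  have hquarter : 1 / 4 ≤ R (midGrid m n) := by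
    have := log_le_log (by linarith) hw₂
    linarith [log_two_lt_d9]
  have hlog : log (midGrid m n) ≤ log (((n : ℝ) + 1) / (m + 1)) + 1 / (2 * m + 1) := by
    have hle : midGrid m n ≤ ((n : ℝ) + 1) / (m + 1) * (1 + 1 / (2 * m + 1)) := by
      rw [show ((n : ℝ) + 1) / (m + 1) * (1 + 1 / (2 * m + 1)) = (2 * n + 2) / (2 * m + 1) by
        field_simp; ring, midGrid]
      gcongr
      norm_num
    have hone := log_le_sub_one_of_pos (show (0 : ℝ) < 1 + 1 / (2 * m + 1) by positivity)
    have := log_le_log (by linarith) hle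
    rw [log_mul (by positivity) (by positivity)] at this
    linarith
  have hδ : 1 / (2 * (m : ℝ) + 1) ≤ 4 / (2 * m + 1) * R (midGrid m n) := by
    rw [div_mul_eq_mul_div]
    gcongr
    linarith
  linarith

theorem le_mul_midGrid_of_window (h : IsDickmanExt R) (hm : 0 < m) (hp₁ : ∀ n ≤ m, p n = 1)
    (hp : ∀ n : ℕ, m ≤ n → (n : ℝ) * p n = ∑ k ∈ Finset.range m, p (n - m + k)) (n : ℕ) :
    p n ≤ (1 + 4 / (2 * m + 1)) * R (midGrid m n) := by
  induction n using Nat.strong_induction_on with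
  | _ n ih =>
    rcases le_total n m with hnm | hmn
    · rw [hp₁ n hnm, h.eq_one (midGrid_le_one hnm), mul_one, le_add_iff_nonneg_right]
      positivity
    rcases le_or_gt n (2 * m) with hn | hn
    · exact (le_one_sub_log_of_window hp₁ hp hmn hn).trans (h.one_sub_log_le_mul_midGrid hmn hn)
    refine le_of_mul_le_mul_left ?_ (Nat.cast_pos (α := ℝ).2 (hm.trans_le hmn))
    calc (n : ℝ) * p n = ∑ k ∈ Finset.range m, p (n - m + k) := hp n hmn
      _ ≤ ∑ k ∈ Finset.range m, (1 + 4 / (2 * m + 1)) * R (midGrid m (n - m + k)) :=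
          Finset.sum_le_sum fun k hk => ih _ (by rw [Finset.mem_range] at hk; lia)
      _ = (1 + 4 / (2 * m + 1)) * ∑ k ∈ Finset.range m, R (midGrid m (n - m + k)) :=
          (Finset.mul_sum _ _ _).symm
      _ ≤ (1 + 4 / (2 * m + 1)) * (n * R (midGrid m n)) := by
          gcongr; exact h.sum_midGrid_le hn
      _ = n * ((1 + 4 / (2 * m + 1)) * R (midGrid m n)) := by ring

theorem mul_exp_le_sum_mul_exp (h : IsDickmanExt R) (hm : 2 ≤ m) (hmn : m ≤ n) {y : ℝ}
    (hy : (negLogDeriv R (midGrid m n) / (2 * m + 1)) ^ 2 ≤ y) :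
    n * (R (midGrid m n) * exp (-(20 * y / m * n))) ≤
      ∑ k ∈ Finset.range m,
        R (midGrid m (n - m + k)) * exp (-(20 * y / m * (n - m + k : ℕ))) := by
  have hy₀ : 0 ≤ y := (sq_nonneg _).trans hy
  have hm₀ : (m : ℝ) ≠ 0 := by norm_cast; lia
  have hR := h.pos (midGrid m n)
  set α := 20 * y / m with hα
  have hαm : α * m / 2 = 10 * y := by rw [hα]; field_simp; ring
  have hcheb := exp_mul_sum_le_sum_mul_exp (r := fun k => R (midGrid m (n - m + k)))
    (fun a b hab => h.antitone (monotone_midGrid m (by gcongr))) (fun k => (h.pos _).le) m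
    (α := α) (by positivity)
  rw [hαm] at hcheb
  calc n * (R (midGrid m n) * exp (-(α * n)))
      = exp (-(α * n)) * (exp (10 * y) * (n * R (midGrid m n) * exp (-(10 * y)))) := by
        rw [exp_neg (10 * y)]; field_simp
    _ ≤ exp (-(α * n)) * (exp (10 * y) * ∑ k ∈ Finset.range m, R (midGrid m (n - m + k))) := by
        gcongr
        refine le_trans ?_ (h.mul_exp_le_sum_midGrid hm hmn)
        gcongr
    _ ≤ exp (-(α * n)) *
          ∑ k ∈ Finset.range m, R (midGrid m (n - m + k)) * exp (α * (m - k)) := by gcongr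
    _ = _ := by
        rw [Finset.mul_sum]
        refine Finset.sum_congr rfl fun k _ => ?_
        rw [mul_left_comm, ← exp_add]
        push_cast [hmn]
        ring_nf

theorem mul_exp_le_of_window (h : IsDickmanExt R) (hm : 2 ≤ m) (hp₁ : ∀ n ≤ m, 1 ≤ p n)
    (hp : ∀ n : ℕ, m ≤ n → ∑ k ∈ Finset.range m, p (n - m + k) ≤ n * p n) (hn : n ≤ N) :
    R (midGrid m n) *
      exp (-(20 * (negLogDeriv R (midGrid m N) / (2 * m + 1)) ^ 2 / m * n)) ≤ p n := by
  induction n using Nat.strong_induction_on with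
  | _ n ih =>
    rcases le_total n m with hnm | hmn
    · rw [h.eq_one (midGrid_le_one hnm), one_mul]
      exact (exp_le_one_iff.2 (neg_nonpos.2 (by positivity))).trans (hp₁ n hnm)
    have hy : (negLogDeriv R (midGrid m n) / (2 * m + 1)) ^ 2 ≤
        (negLogDeriv R (midGrid m N) / (2 * m + 1)) ^ 2 := by
      have := h.negLogDeriv_pos (one_le_midGrid hmn)
      gcongr
      exact h.strictMonoOn_negLogDeriv.monotoneOn (one_le_midGrid hmn)
        (one_le_midGrid (hmn.trans hn)) (monotone_midGrid m hn)
    refine le_of_mul_le_mul_left ?_ (show (0 : ℝ) < n by norm_cast; lia)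
    calc _ ≤ _ := h.mul_exp_le_sum_mul_exp hm hmn hy
      _ ≤ ∑ k ∈ Finset.range m, p (n - m + k) := Finset.sum_le_sum fun k hk => by
          rw [Finset.mem_range] at hk
          exact ih _ (by lia) (by lia)
      _ ≤ n * p n := hp n hmn

end IsDickmanExt

theorem exp_neg_div_mul_log_le_of_window {m n N : ℕ} {p : ℕ → ℝ} (hm : 0 < m)
    (hp₀ : ∀ n, 0 ≤ p n) (hp₁ : ∀ n ≤ m, 1 ≤ p n)
    (hp : ∀ n : ℕ, m ≤ n → ∑ k ∈ Finset.range m, p (n - m + k) ≤ n * p n) (hn : n ≤ N) :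
    exp (-(n / m * log N)) ≤ p n := by
  have : 0 ≤ log N := log_natCast_nonneg N
  induction n using Nat.strong_induction_on with
  | _ n ih =>
    rcases le_total n m with hnm | hmn
    · exact (exp_le_one_iff.2 (neg_nonpos.2 (by positivity))).trans (hp₁ n hnm)
    have hn₀ : (0 : ℝ) < n := Nat.cast_pos.2 (hm.trans_le hmn)
    have hnN : (n : ℝ) ≤ N := by exact_mod_cast hn
    have hexp : exp (-(n / m * log N)) * N = exp (-((n - m : ℕ) / m * log N)) := by
      nth_rw 2 [← exp_log (hn₀.trans_le hnN)]
      rw [← exp_add]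
      push_cast [hmn]
      field_simp
      ring_nf
    refine le_of_mul_le_mul_left ?_ hn₀
    calc n * exp (-(n / m * log N)) ≤ exp (-(n / m * log N)) * N := by
          rw [mul_comm]; gcongr
      _ ≤ p (n - m) := hexp.trans_le (ih _ (by lia) (by lia))
      _ ≤ ∑ k ∈ Finset.range m, p (n - m + k) :=
          Finset.single_le_sum (f := fun k => p (n - m + k)) (fun k _ => hp₀ _)
            (Finset.mem_range.2 hm)
      _ ≤ n * p n := hp n hmn

/-! ### Perturbation of the logarithmic derivative -/

section GeometricTail

open PowerSeries

theorem geom_sum_le_two_mul {y : ℝ} {m : ℕ} (hy : 0 ≤ y) (h : y ^ m ≤ 1 / 2) (n : ℕ) :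
    ∑ i ∈ Finset.range n, y ^ i ≤ 2 * m := by
  have bernoulli := one_add_mul_le_pow (a := y - 1) (by linarith) m
  rw [add_sub_cancel] at bernoulli
  have hgeom := mul_neg_geom_sum y n
  have hsum : 0 ≤ ∑ i ∈ Finset.range n, y ^ i := Finset.sum_nonneg fun i _ => pow_nonneg hy i
  have hn : 0 ≤ y ^ n := pow_nonneg hy n
  calc ∑ i ∈ Finset.range n, y ^ i
      ≤ 2 * (m * (1 - y)) * ∑ i ∈ Finset.range n, y ^ i := le_mul_of_one_le_left hsum (by linarith)
    _ = 2 * m * (1 - y ^ n) := by rw [← hgeom]; ring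
    _ ≤ 2 * m := mul_le_of_le_one_right (by positivity) (by linarith)

theorem sum_mul_pow_div_le {b : ℕ → ℝ} {m : ℕ} {t r X : ℝ} (ht : 0 ≤ t) (hr : 0 ≤ r)
    (hb₀ : ∀ j < m, b j = 0) (hb : ∀ j, m ≤ j → b j ≤ 2 * t ^ (j + 1))
    (hX : (r * t) ^ m ≤ X) (hX₂ : X ≤ 1 / 2) (n : ℕ) :
    ∑ j ∈ Finset.range n, b j * r ^ (j + 1) / (j + 1) ≤ 4 * X := by
  have hm : 0 < (m : ℝ) := Nat.cast_pos.2 <| Nat.pos_of_ne_zero fun h => by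
    rw [h, pow_zero] at hX
    linarith
  have hX₀ : 0 ≤ X := le_trans (by positivity) hX
  have hy₁ : r * t ≤ 1 := by
    by_contra! hlt
    linarith [one_le_pow₀ hlt.le (n := m)]
  have hterm : ∀ j, b (m + j) * r ^ (m + j + 1) / ((m + j : ℕ) + 1) ≤
      2 * X / m * (r * t) ^ j := fun j => by
    calc b (m + j) * r ^ (m + j + 1) / ((m + j : ℕ) + 1)
        ≤ 2 * t ^ (m + j + 1) * r ^ (m + j + 1) / m := by
          gcongr
          · exact hb _ (Nat.le_add_right m j)
          · push_cast
            linarith [(Nat.cast_nonneg j : (0 : ℝ) ≤ j)]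
      _ = 2 * (r * t) ^ m / m * (r * t) ^ j * (r * t) := by ring
      _ ≤ 2 * (r * t) ^ m / m * (r * t) ^ j := mul_le_of_le_one_right (by positivity) hy₁
      _ ≤ 2 * X / m * (r * t) ^ j := by gcongr
  calc ∑ j ∈ Finset.range n, b j * r ^ (j + 1) / (j + 1)
      = ∑ j ∈ Finset.Ico m n, b j * r ^ (j + 1) / (j + 1) := by
        refine (Finset.sum_subset (fun j hj => ?_) fun j hj hj' => ?_).symm
        · exact Finset.mem_range.2 (Finset.mem_Ico.1 hj).2
        · have hjm : j < m := by
            simp only [Finset.mem_Ico, Finset.mem_range] at hj hj'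
            lia
          rw [hb₀ j hjm, zero_mul, zero_div]
    _ = ∑ j ∈ Finset.range (n - m), b (m + j) * r ^ (m + j + 1) / ((m + j : ℕ) + 1) :=
        Finset.sum_Ico_eq_sum_range _ m n
    _ ≤ 2 * X / m * ∑ j ∈ Finset.range (n - m), (r * t) ^ j := by
        rw [Finset.mul_sum]
        exact Finset.sum_le_sum fun j _ => hterm j
    _ ≤ 2 * X / m * (2 * m) := by
        gcongr
        exact geom_sum_le_two_mul (by positivity) (hX.trans hX₂) _
    _ = 4 * X := by field_simp; ring

theorem HasLogDeriv.sum_coeff_mul_pow_le_one_add {M g : ℝ⟦X⟧} {m : ℕ} {t r X : ℝ}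
    (hg : HasLogDeriv M g) (ht : 0 ≤ t) (hr : 0 ≤ r) (hM₀ : ∀ j < m, coeff j M = 0)
    (hM : ∀ j, m ≤ j → 0 ≤ coeff j M ∧ coeff j M ≤ 2 * t ^ (j + 1))
    (hX : (r * t) ^ m ≤ X) (hX₈ : X ≤ 1 / 8) (n : ℕ) :
    ∑ k ∈ Finset.range n, coeff k g * r ^ k ≤ 1 + 8 * X := by
  have hM_nonneg : ∀ j, 0 ≤ coeff j M := fun j =>
    (lt_or_ge j m).elim (fun h => (hM₀ j h).ge) fun h => (hM j h).1
  have hX₀ : 0 ≤ X := le_trans (by positivity) hX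
  have hmono : ∑ k ∈ Finset.range n, coeff k g * r ^ k ≤
      ∑ k ∈ Finset.range (n + 1), coeff k g * r ^ k :=
    Finset.sum_le_sum_of_subset_of_nonneg (Finset.range_subset_range.2 n.le_succ)
      fun k _ _ => mul_nonneg (hg.coeff_nonneg hM_nonneg k) (pow_nonneg hr k)
  have hnonneg : 0 ≤ ∑ k ∈ Finset.range n, coeff k g * r ^ k :=
    Finset.sum_nonneg fun k _ => mul_nonneg (hg.coeff_nonneg hM_nonneg k) (pow_nonneg hr k)
  have htail : ∑ j ∈ Finset.range n, coeff j M * r ^ (j + 1) / (j + 1) ≤ 4 * X :=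
    sum_mul_pow_div_le ht hr hM₀ (fun j hj => (hM j hj).2) hX (by linarith) n
  have hself : ∑ k ∈ Finset.range n, coeff k g * r ^ k ≤
      1 + 4 * X * ∑ k ∈ Finset.range n, coeff k g * r ^ k :=
    hmono.trans <| (hg.sum_coeff_mul_pow_le hM_nonneg hr n).trans (by gcongr)
  nlinarith

end GeometricTail

section Window

open PowerSeries Finset.HasAntidiagonal

theorem HasLogDeriv.natCast_mul_coeff_eq_sum_window_add {K : Type*} [CommRing K] {L f : K⟦X⟧}
    {n m : ℕ} (h : HasLogDeriv L f) (hL : ∀ j < m, coeff j L = 1) (hmn : m ≤ n) :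
    (n : K) * coeff n f = ∑ k ∈ Finset.range m, coeff (n - m + k) f +
      ∑ j ∈ Finset.Ico m n, coeff j L * coeff (n - 1 - j) f := by
  rw [h.natCast_mul_coeff, ← Finset.sum_range_add_sum_Ico _ hmn,
    ← Finset.sum_range_reflect (fun k => coeff (n - m + k) f)]
  congr 1
  refine Finset.sum_congr rfl fun j hj => ?_
  rw [Finset.mem_range] at hj
  rw [hL j hj, one_mul, show n - m + (m - 1 - j) = n - 1 - j by lia]

theorem HasLogDeriv.sum_window_le {L f : ℝ⟦X⟧} {n m : ℕ} (h : HasLogDeriv L f)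
    (hL : ∀ j < m, coeff j L = 1) (hL₀ : ∀ j, m ≤ j → 0 ≤ coeff j L) (hmn : m ≤ n) :
    ∑ k ∈ Finset.range m, coeff (n - m + k) f ≤ n * coeff n f := by
  have hL_nonneg : ∀ j, 0 ≤ coeff j L := fun j =>
    (lt_or_ge j m).elim (fun hj => (hL j hj).symm ▸ zero_le_one) (hL₀ j)
  rw [h.natCast_mul_coeff_eq_sum_window_add hL hmn]
  exact le_add_of_nonneg_right <| Finset.sum_nonneg fun j _ =>
    mul_nonneg (hL_nonneg j) (h.coeff_nonneg hL_nonneg _)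

/-- The logarithmic derivative `1 + X + ⋯ + X ^ (m - 1)` of the exponential generating function of
permutations without cycles longer than `m`. -/
noncomputable def permLogDeriv (m : ℕ) : ℝ⟦X⟧ :=
  PowerSeries.mk fun j => if j < m then 1 else 0

theorem coeff_permLogDeriv_of_lt {m j : ℕ} (h : j < m) : coeff j (permLogDeriv m) = 1 := by
  rw [permLogDeriv, coeff_mk, if_pos h]

theorem coeff_permLogDeriv_of_le {m j : ℕ} (h : m ≤ j) : coeff j (permLogDeriv m) = 0 := by
  rw [permLogDeriv, coeff_mk, if_neg h.not_gt]

theorem HasLogDeriv.coeff_eq_one {K : Type*} [Field K] [CharZero K] {L f : K⟦X⟧} {n m : ℕ}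
    (h : HasLogDeriv L f) (hL : ∀ j < m, coeff j L = 1) (hn : n ≤ m) : coeff n f = 1 := by
  induction n using Nat.strong_induction_on with
  | h n ih =>
    rcases n.eq_zero_or_pos with rfl | hpos
    · exact h.coeff_zero_eq
    · have hsum : ∀ j ∈ Finset.range n, coeff j L * coeff (n - 1 - j) f = 1 := fun j hj => by
        rw [Finset.mem_range] at hj
        rw [hL j (by lia), ih _ (by lia) (by lia), one_mul]
      have hn₀ : (n : K) ≠ 0 := Nat.cast_ne_zero.2 hpos.ne'
      have hrec := h.natCast_mul_coeff n
      rw [Finset.sum_congr rfl hsum, Finset.sum_const, Finset.card_range, nsmul_eq_mul] at hrec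
      exact mul_left_cancel₀ hn₀ hrec

theorem HasLogDeriv.exists_eq_mul {K : Type*} [Field K] [Algebra ℚ K] {L f : K⟦X⟧}
    (h : HasLogDeriv L f) (M : K⟦X⟧) :
    ∃ a g, HasLogDeriv M a ∧ HasLogDeriv (L - M) g ∧ f = a * g := by
  obtain ⟨a, ha⟩ := HasLogDeriv.exists_hasLogDeriv M
  refine ⟨a, f * a⁻¹, ha, h.mul_inv ha, ?_⟩
  rw [mul_left_comm, PowerSeries.mul_inv_cancel, mul_one]
  simp [ha.constantCoeff_eq]

theorem exp_mul_two_div_pow_le {x : ℝ} (hx : 0 ≤ x) (m : ℕ) :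
    exp (x * (2 / (2 * m + 1))) ^ m ≤ exp x := by
  have hm : (m : ℝ) * (2 / (2 * m + 1)) ≤ 1 := by
    rw [mul_div_assoc', div_le_one (by positivity)]
    linarith
  rw [← exp_nat_mul, mul_left_comm]
  gcongr
  exact mul_le_of_le_one_right hx hm

theorem coeff_mul_le_mul_sum {K : Type*} [CommSemiring K] [PartialOrder K] [IsOrderedRing K]
    {a g : K⟦X⟧} {n : ℕ} {C r : K} (ha : ∀ x ∈ antidiagonal n, coeff x.1 a ≤ C * r ^ x.2)
    (hg : ∀ k, 0 ≤ coeff k g) :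
    coeff n (a * g) ≤ C * ∑ k ∈ Finset.range (n + 1), coeff k g * r ^ k := by
  calc coeff n (a * g) = ∑ x ∈ antidiagonal n, coeff x.1 a * coeff x.2 g := coeff_mul n a g
    _ ≤ ∑ x ∈ antidiagonal n, C * (coeff x.2 g * r ^ x.2) :=
      Finset.sum_le_sum fun x hx =>
        (mul_le_mul_of_nonneg_right (ha x hx) (hg x.2)).trans_eq (by ring)
    _ = C * ∑ k ∈ Finset.range (n + 1), coeff k g * r ^ k := by
      rw [← Finset.mul_sum, ← Finset.Nat.sum_antidiagonal_swap,
        Finset.Nat.sum_antidiagonal_eq_sum_range_succ_mk]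
      rfl

namespace IsDickmanExt

variable {R : ℝ → ℝ} {n m : ℕ}

theorem coeff_le_mul_midGrid_of_permLogDeriv (h : IsDickmanExt R) {a : ℝ⟦X⟧} (hm : 0 < m)
    (ha : HasLogDeriv (permLogDeriv m) a) (n : ℕ) :
    coeff n a ≤ (1 + 4 / (2 * m + 1)) * R (midGrid m n) := by
  refine h.le_mul_midGrid_of_window hm
    (fun n hn => ha.coeff_eq_one (fun _ => coeff_permLogDeriv_of_lt) hn) (fun n hn => ?_) n
  rw [ha.natCast_mul_coeff_eq_sum_window_add (fun _ => coeff_permLogDeriv_of_lt) hn,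
    add_eq_left]
  exact Finset.sum_eq_zero fun j hj => by
    rw [coeff_permLogDeriv_of_le (Finset.mem_Ico.1 hj).1, zero_mul]

theorem midGrid_le_mul_exp_pow (h : IsDickmanExt R) {i j : ℕ} (hij : m ≤ i + j) :
    R (midGrid m i) ≤ R (midGrid m (i + j)) *
      exp (negLogDeriv R (midGrid m (i + j)) * (2 / (2 * m + 1))) ^ j := by
  have hstep : midGrid m (i + j) - midGrid m i = j * (2 / (2 * m + 1)) := by
    rw [midGrid, midGrid]
    push_cast
    ring
  convert h.le_mul_exp (one_le_midGrid hij) (midGrid m i) using 2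
  rw [← exp_nat_mul]
  congr 1
  linear_combination -negLogDeriv R (midGrid m (i + j)) * hstep

-- `f = a * g`, where `a` satisfies the pure window recurrence and `g` carries the tail of `L`.
-- Log-concavity of `R` bounds `aₙ₋ₖ` by `rᵏ` times the main term, leaving `∑ gₖ rᵏ ≤ 1 + 8 X`.
theorem coeff_le_mul_midGrid (h : IsDickmanExt R) {L f : ℝ⟦X⟧} {t X : ℝ} (hm : 0 < m)
    (hmn : m ≤ n) (ht : 0 ≤ t) (hf : HasLogDeriv L f) (hL₁ : ∀ j < m, coeff j L = 1)
    (hL : ∀ j, m ≤ j → 0 ≤ coeff j L ∧ coeff j L ≤ 2 * t ^ (j + 1))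
    (hX : exp (negLogDeriv R (midGrid m n)) * t ^ m ≤ X) (hX₈ : X ≤ 1 / 8) :
    coeff n f ≤ (1 + 4 / (2 * m + 1)) * R (midGrid m n) * (1 + 8 * X) := by
  obtain ⟨a, g, ha, hg, rfl⟩ := hf.exists_eq_mul (permLogDeriv m)
  have hM₀ : ∀ j < m, coeff j (L - permLogDeriv m) = 0 := fun j hj => by
    rw [map_sub, hL₁ j hj, coeff_permLogDeriv_of_lt hj, sub_self]
  have hM : ∀ j, m ≤ j → 0 ≤ coeff j (L - permLogDeriv m) ∧
      coeff j (L - permLogDeriv m) ≤ 2 * t ^ (j + 1) := fun j hj => by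
    rw [map_sub, coeff_permLogDeriv_of_le hj, sub_zero]
    exact hL j hj
  have hg_nonneg : ∀ k, 0 ≤ coeff k g := hg.coeff_nonneg fun j =>
    (lt_or_ge j m).elim (fun h => (hM₀ j h).ge) fun h => (hM j h).1
  set w := midGrid m n with hw
  set r := exp (negLogDeriv R w * (2 / (2 * m + 1))) with hr
  have hR : 0 < R w := h.pos w
  have ha_le : ∀ x ∈ antidiagonal n,
      coeff x.1 a ≤ (1 + 4 / (2 * m + 1)) * R w * r ^ x.2 := fun x hx => by
    rw [mul_assoc, hr, hw, ← mem_antidiagonal.1 hx]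
    exact (h.coeff_le_mul_midGrid_of_permLogDeriv hm ha x.1).trans <|
      mul_le_mul_of_nonneg_left
        (h.midGrid_le_mul_exp_pow (hmn.trans_eq (mem_antidiagonal.1 hx).symm)) (by positivity)
  have hrt : (r * t) ^ m ≤ X := by
    refine le_trans ?_ hX
    rw [mul_pow]
    gcongr
    exact exp_mul_two_div_pow_le (h.negLogDeriv_pos (one_le_midGrid hmn)).le m
  calc coeff n (a * g)
      ≤ (1 + 4 / (2 * m + 1)) * R w * ∑ k ∈ Finset.range (n + 1), coeff k g * r ^ k :=
        coeff_mul_le_mul_sum ha_le hg_nonneg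
    _ ≤ (1 + 4 / (2 * m + 1)) * R w * (1 + 8 * X) := by
      gcongr
      exact hg.sum_coeff_mul_pow_le_one_add ht (exp_pos _).le hM₀ hM hrt hX₈ _

end IsDickmanExt

end Window

/-! ### The error term -/

section ErrTerm

/-- The error term `u * log (u + 1) ^ 2 / m ^ 2 + 1 / u` of the comparison, where `u = n / m`. -/
noncomputable def errTerm (n m : ℕ) : ℝ :=
  (n / m : ℝ) * log (n / m + 1) ^ 2 / m ^ 2 + 1 / (n / m : ℝ)

theorem one_half_le_log_add_one {u : ℝ} (hu : 1 ≤ u) : 1 / 2 ≤ log (u + 1) := by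
  have hlog : log 2 ≤ log (u + 1) := log_le_log two_pos (by linarith)
  linarith [log_two_gt_d9]

theorem one_le_natCast_div_natCast {n m : ℕ} (hm : 0 < m) (hmn : m ≤ n) : (1 : ℝ) ≤ n / m :=
  (one_le_div (Nat.cast_pos.2 hm)).2 (Nat.cast_le.2 hmn)

variable {n m : ℕ}

theorem errTerm_pos (hm : 0 < m) (hmn : m ≤ n) : 0 < errTerm n m := by
  have hu := one_le_natCast_div_natCast hm hmn
  unfold errTerm
  positivity

theorem two_mul_log_div_le_errTerm (hm : 0 < m) (hmn : m ≤ n) :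
    2 * log (n / m + 1) / m ≤ errTerm n m := by
  have hu := one_le_natCast_div_natCast hm hmn
  rw [errTerm]
  set u : ℝ := n / m
  have hsq : u * log (u + 1) ^ 2 / m ^ 2 + 1 / u - 2 * log (u + 1) / m =
      u * (log (u + 1) / m - 1 / u) ^ 2 := by field_simp; ring
  have hnonneg : 0 ≤ u * (log (u + 1) / m - 1 / u) ^ 2 := by positivity
  linarith

theorem one_div_le_errTerm (hm : 0 < m) (hmn : m ≤ n) : 1 / m ≤ errTerm n m := by
  refine le_trans ?_ (two_mul_log_div_le_errTerm hm hmn)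
  gcongr
  linarith [one_half_le_log_add_one (one_le_natCast_div_natCast hm hmn)]

theorem mul_log_sq_div_le_errTerm : (n / m : ℝ) * log (n / m + 1) ^ 2 / m ^ 2 ≤ errTerm n m :=
  le_add_of_nonneg_right (by positivity)

theorem mul_log_div_le_errTerm (hm : 0 < m) (hmn : m ≤ n) :
    (n / m : ℝ) * log (n / m + 1) / m ^ 2 ≤ 2 * errTerm n m := by
  have hL := one_half_le_log_add_one (one_le_natCast_div_natCast hm hmn)
  calc (n / m : ℝ) * log (n / m + 1) / m ^ 2
      ≤ (n / m : ℝ) * log (n / m + 1) / m ^ 2 * (2 * log (n / m + 1)) :=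
        le_mul_of_one_le_right (by positivity) (by linarith)
    _ = 2 * ((n / m : ℝ) * log (n / m + 1) ^ 2 / m ^ 2) := by ring
    _ ≤ 2 * errTerm n m := by gcongr; exact mul_log_sq_div_le_errTerm

theorem mul_log_le_errTerm (hm : 0 < m) (hmn : m ≤ n) {M : ℝ} (hM : m ≤ M) :
    (n / m : ℝ) * log (n / m + 1) ≤ 2 * M ^ 2 * errTerm n m := by
  have herr := errTerm_pos hm hmn
  calc (n / m : ℝ) * log (n / m + 1) = (n / m : ℝ) * log (n / m + 1) / m ^ 2 * m ^ 2 := by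
        field_simp
    _ ≤ 2 * errTerm n m * M ^ 2 := by gcongr; exact mul_log_div_le_errTerm hm hmn
    _ = 2 * M ^ 2 * errTerm n m := by ring

end ErrTerm

theorem div_sub_div_two_mul_sq_nonneg {n m : ℕ} (hm : 0 < m) :
    0 ≤ (n / m - n / (2 * m ^ 2) : ℝ) := by
  have hm₁ : (1 : ℝ) ≤ m := Nat.one_le_cast.2 hm
  rw [show (n / m - n / (2 * m ^ 2) : ℝ) = n * (2 * m - 1) / (2 * m ^ 2) by field_simp]
  exact div_nonneg (mul_nonneg n.cast_nonneg (by linarith)) (by positivity)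

namespace IsDickmanExt

variable {R : ℝ → ℝ} {n m : ℕ}

theorem negLogDeriv_midGrid_le (h : IsDickmanExt R) (hm : 0 < m) (hmn : m ≤ n) :
    negLogDeriv R (midGrid m n) ≤ 4 * log (n / m + 1) :=
  h.negLogDeriv_le (one_le_midGrid hmn) (midGrid_le_div hm hmn)

theorem abs_log_sub_log_midGrid_le (h : IsDickmanExt R) (hm : 0 < m) (hmn : m ≤ n) :
    |log (R (n / m - n / (2 * m ^ 2))) - log (R (midGrid m n))| ≤ 3 * errTerm n m := by
  set v : ℝ := n / m - n / (2 * m ^ 2) with hv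
  set w := midGrid m n with hw
  have hsub : w - v = (2 * m ^ 2 + n) / (2 * m ^ 2 * (2 * m + 1)) := by
    rw [hw, hv, midGrid]
    field_simp
    ring
  have hvw : 0 ≤ w - v := hsub ▸ by positivity
  have hwv : w - v ≤ 1 / (2 * m) + n / m / (4 * m ^ 2) := by
    calc w - v ≤ (2 * m ^ 2 + n) / (2 * m ^ 2 * (2 * m)) := by
          rw [hsub]
          gcongr
          linarith
      _ = 1 / (2 * m) + n / m / (4 * m ^ 2) := by field_simp; ring
  have hmono : log (R w) ≤ log (R v) := log_le_log (h.pos w) (h.antitone (sub_nonneg.1 hvw))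
  have hconc : log (R v) ≤ log (R w) + negLogDeriv R w * (w - v) := by
    have hle := log_le_log (h.pos v) (h.le_mul_exp (one_le_midGrid hmn) v)
    rw [log_mul (h.pos w).ne' (exp_ne_zero _), log_exp] at hle
    linarith
  have hdiff : negLogDeriv R w * (w - v) ≤ 3 * errTerm n m := by
    calc negLogDeriv R w * (w - v)
        ≤ 4 * log (n / m + 1) * (1 / (2 * m) + n / m / (4 * m ^ 2)) := by
          gcongr
          · have := one_half_le_log_add_one (one_le_natCast_div_natCast hm hmn)
            positivity
          · exact h.negLogDeriv_midGrid_le hm hmn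
      _ = 2 * log (n / m + 1) / m + (n / m : ℝ) * log (n / m + 1) / m ^ 2 := by field_simp; ring
      _ ≤ errTerm n m + 2 * errTerm n m :=
          add_le_add (two_mul_log_div_le_errTerm hm hmn) (mul_log_div_le_errTerm hm hmn)
      _ = 3 * errTerm n m := by ring
  rw [abs_of_nonneg (sub_nonneg.2 hmono)]
  linarith

theorem negLogDeriv_midGrid_le_mul_log (h : IsDickmanExt R) {ε : ℝ} (hε : 0 < ε) (hm : 0 < m)
    (hmn : m ≤ n) : negLogDeriv R (midGrid m n) ≤
      (1 + ε / 2) * (log (2 * (2 + ε) / ε) + (log n - log m)) := by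
  set w := midGrid m n
  have hn : 0 < n := hm.trans_le hmn
  have hw : w ≤ n / m := midGrid_le_div hm hmn
  have hθ₁ : 2 / (2 + ε) < 1 := by rw [div_lt_one (by positivity)]; linarith
  have hexp : exp (2 / (2 + ε) * negLogDeriv R w) ≤ 2 * (2 + ε) / ε * (n / m) := by
    calc exp (2 / (2 + ε) * negLogDeriv R w)
        ≤ (w + 2 / (2 + ε)) / (1 - 2 / (2 + ε)) :=
          h.exp_mul_negLogDeriv_le (one_le_midGrid hmn) (by positivity) hθ₁
      _ = (w + 2 / (2 + ε)) / (ε / (2 + ε)) := by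
          rw [one_sub_div (by positivity), add_sub_cancel_left]
      _ ≤ (n / m + n / m) / (ε / (2 + ε)) := by
          have hθu := hθ₁.le.trans (one_le_natCast_div_natCast hm hmn)
          gcongr ?_ / _
          linarith
      _ = 2 * (2 + ε) / ε * (n / m) := by field_simp; ring
  rw [← le_log_iff_exp_le (by positivity), log_mul (by positivity) (by positivity),
    log_div (Nat.cast_ne_zero.2 hn.ne') (Nat.cast_ne_zero.2 hm.ne')] at hexp
  calc negLogDeriv R w = (1 + ε / 2) * (2 / (2 + ε) * negLogDeriv R w) := by field_simp
    _ ≤ (1 + ε / 2) * (log (2 * (2 + ε) / ε) + (log n - log m)) := by gcongr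

-- The hypothesis `q ^ (m / 2) ≥ n ^ (1 + ε / 2)` beats the bound `O((n / m) ^ (1 + ε / 2))` for
-- `exp (negLogDeriv R (midGrid m n))` by a factor of at least `m`.
theorem exp_negLogDeriv_midGrid_mul_le (h : IsDickmanExt R) {ε q : ℝ} (hε : 0 < ε) (hq : 1 < q)
    (hm : 0 < m) (hmn : m ≤ n) (hnq : (2 + ε) * log n / log q ≤ m) :
    exp (negLogDeriv R (midGrid m n)) * (√q)⁻¹ ^ m ≤
      exp ((1 + ε / 2) * log (2 * (2 + ε) / ε)) / m := by
  have hm₀ : 0 < (m : ℝ) := Nat.cast_pos.2 hm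
  have hκ := h.negLogDeriv_midGrid_le_mul_log hε hm hmn
  rw [div_le_iff₀ (log_pos hq)] at hnq
  have hpow : (√q)⁻¹ ^ m = exp (-(m * log q / 2)) := by
    rw [mul_div_assoc, ← log_sqrt (by linarith), exp_neg, exp_nat_mul, exp_log (by positivity),
      inv_pow]
  have hlogm : 0 ≤ ε * log m := mul_nonneg hε.le (log_natCast_nonneg m)
  rw [hpow, ← exp_add, le_div_iff₀ hm₀, ← exp_log hm₀, ← exp_add, exp_le_exp, exp_log hm₀]
  linarith

end IsDickmanExt

section PolyProbBounds

variable {F : Type} [Field F] [Fintype F] {n m : ℕ}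

theorem polyProb_nonneg (n m : ℕ) : 0 ≤ polyProb F n m := by
  unfold polyProb
  positivity

theorem sum_polyProb_window_le (hmn : m ≤ n) :
    ∑ k ∈ Finset.range m, polyProb F (n - m + k) m ≤ n * polyProb F n m := by
  simpa only [PowerSeries.coeff_mk] using (hasLogDeriv_polyProb (F := F) m).sum_window_le
    (fun _ => coeff_friableLogDeriv_of_lt) (fun j _ => coeff_friableLogDeriv_nonneg m j) hmn

theorem exp_neg_le_polyProb (hm : 0 < m) : exp (-(n / m * log n)) ≤ polyProb F n m :=
  exp_neg_div_mul_log_le_of_window (p := fun n => polyProb F n m) hm (polyProb_nonneg · m)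
    (fun _ hn => (polyProb_of_le hn).ge) (fun _ => sum_polyProb_window_le) le_rfl

theorem polyProb_pos (hm : 0 < m) : 0 < polyProb F n m :=
  (exp_pos _).trans_le (exp_neg_le_polyProb hm)

theorem abs_log_polyProb_le (hm : 0 < m) (hmn : m ≤ n) {M : ℝ} (hM : m ≤ M) :
    |log (polyProb F n m)| ≤ (2 + 4 * M) * M ^ 2 * errTerm n m := by
  have hu : (1 : ℝ) ≤ n / m := one_le_natCast_div_natCast hm hmn
  have hm₀ : 0 < (m : ℝ) := Nat.cast_pos.2 hm
  have hL := one_half_le_log_add_one hu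
  have hlogn : log n ≤ (1 + 2 * M) * log (n / m + 1) := by
    have hlogm : log m ≤ m - 1 := log_le_sub_one_of_pos hm₀
    have hlogu : log (n / m) ≤ log (n / m + 1) := log_le_log (by positivity) (by linarith)
    rw [log_div (Nat.cast_ne_zero.2 (hm.trans_le hmn).ne') hm₀.ne'] at hlogu
    have hML : M * 1 ≤ M * (2 * log (n / m + 1)) := by gcongr <;> linarith
    linarith
  have hlower := (le_log_iff_exp_le (polyProb_pos hm)).2 (exp_neg_le_polyProb (F := F) (n := n) hm)
  rw [abs_of_nonpos (log_nonpos (polyProb_nonneg n m) (polyProb_le_one n m))]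
  calc -log (polyProb F n m) ≤ n / m * log n := neg_le.1 hlower
    _ ≤ n / m * ((1 + 2 * M) * log (n / m + 1)) := by gcongr
    _ = (1 + 2 * M) * (n / m * log (n / m + 1)) := by ring
    _ ≤ (1 + 2 * M) * (2 * M ^ 2 * errTerm n m) :=
      mul_le_mul_of_nonneg_left (mul_log_le_errTerm hm hmn hM) (by linarith)
    _ = (2 + 4 * M) * M ^ 2 * errTerm n m := by ring

namespace IsDickmanExt

variable {R : ℝ → ℝ}

theorem abs_log_midGrid_le (h : IsDickmanExt R) (hm : 0 < m) (hmn : m ≤ n) {M : ℝ} (hM : m ≤ M) :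
    |log (R (midGrid m n))| ≤ 8 * M ^ 2 * errTerm n m := by
  set w := midGrid m n
  have hL := one_half_le_log_add_one (one_le_natCast_div_natCast hm hmn)
  have hzero : 0 ≤ log (R w) + negLogDeriv R w * w := by
    have hle := h.le_mul_exp (one_le_midGrid hmn) 0
    rw [h.eq_one zero_le_one, ← log_nonneg_iff (mul_pos (h.pos w) (exp_pos _)),
      log_mul (h.pos w).ne' (exp_ne_zero _), log_exp] at hle
    linarith
  rw [abs_of_nonpos (log_nonpos (h.pos w).le (h.le_one w))]
  calc -log (R w) ≤ negLogDeriv R w * w := by linarith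
    _ ≤ 4 * log (n / m + 1) * (n / m) := by
      gcongr
      · linarith [one_le_midGrid hmn]
      · exact h.negLogDeriv_midGrid_le hm hmn
      · exact midGrid_le_div hm hmn
    _ = 4 * (n / m * log (n / m + 1)) := by ring
    _ ≤ 4 * (2 * M ^ 2 * errTerm n m) :=
      mul_le_mul_of_nonneg_left (mul_log_le_errTerm hm hmn hM) zero_le_four
    _ = 8 * M ^ 2 * errTerm n m := by ring

theorem log_midGrid_sub_le_log_polyProb (h : IsDickmanExt R) (hm : 2 ≤ m) (hmn : m ≤ n) :
    log (R (midGrid m n)) - 80 * errTerm n m ≤ log (polyProb F n m) := by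
  set w := midGrid m n
  have hm₀ : 0 < m := by lia
  have hκ : 0 ≤ negLogDeriv R w := (h.negLogDeriv_pos (one_le_midGrid hmn)).le
  have hle := h.mul_exp_le_of_window (p := fun n => polyProb F n m) (N := n) hm
    (fun _ hn => (polyProb_of_le hn).ge) (fun _ => sum_polyProb_window_le) le_rfl
  have hlog := log_le_log (mul_pos (h.pos w) (exp_pos _)) hle
  rw [log_mul (h.pos w).ne' (exp_ne_zero _), log_exp] at hlog
  have herr : 20 * (negLogDeriv R w / (2 * m + 1)) ^ 2 / m * n ≤ 80 * errTerm n m := by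
    calc 20 * (negLogDeriv R w / (2 * m + 1)) ^ 2 / m * n
        ≤ 20 * (4 * log (n / m + 1) / (2 * m)) ^ 2 / m * n := by
          have hκL := h.negLogDeriv_midGrid_le hm₀ hmn
          have hm₁ : (2 * m : ℝ) ≤ 2 * m + 1 := by linarith
          have hL := hκ.trans hκL
          gcongr
      _ = 80 * (n / m * log (n / m + 1) ^ 2 / m ^ 2) := by field_simp; ring
      _ ≤ 80 * errTerm n m := by
          gcongr
          exact mul_log_sq_div_le_errTerm
  linarith

theorem log_polyProb_le (h : IsDickmanExt R) (hm : 0 < m) (hmn : m ≤ n) {C : ℝ}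
    (hC : exp (negLogDeriv R (midGrid m n)) * (√(Fintype.card F : ℝ))⁻¹ ^ m ≤ C / m)
    (hCm : 8 * C ≤ m) :
    log (polyProb F n m) ≤ log (R (midGrid m n)) + (2 + 8 * C) * errTerm n m := by
  have hm₀ : 0 < (m : ℝ) := Nat.cast_pos.2 hm
  have hC₀ : 0 < C := (div_pos_iff_of_pos_right hm₀).1 (lt_of_lt_of_le (by positivity) hC)
  have hle := h.coeff_le_mul_midGrid hm hmn (by positivity) (hasLogDeriv_polyProb (F := F) m)
    (fun _ => coeff_friableLogDeriv_of_lt)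
    (fun j hj => ⟨coeff_friableLogDeriv_nonneg m j, coeff_friableLogDeriv_le hj⟩) hC
    (by rw [div_le_div_iff₀ hm₀ (by norm_num)]; linarith)
  rw [PowerSeries.coeff_mk] at hle
  have hR := h.pos (midGrid m n)
  have hlog := log_le_log (polyProb_pos hm) hle
  rw [log_mul (by positivity) (by positivity), log_mul (by positivity) hR.ne'] at hlog
  have hgrid : log (1 + 4 / (2 * m + 1)) ≤ 2 * (1 / m) := by
    calc log (1 + 4 / (2 * m + 1)) ≤ 4 / (2 * m + 1) := by
          linarith [log_le_sub_one_of_pos (show 0 < 1 + 4 / (2 * m + 1 : ℝ) by positivity)]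
      _ ≤ 4 / (2 * m) := by gcongr; linarith
      _ = 2 * (1 / m) := by field_simp; norm_num
  have htail : log (1 + 8 * (C / m)) ≤ 8 * C * (1 / m) := by
    have hle := log_le_sub_one_of_pos (show 0 < 1 + 8 * (C / m) by positivity)
    linarith [show 8 * (C / m) = 8 * C * (1 / m) by ring]
  have herr : (2 + 8 * C) * (1 / m) ≤ (2 + 8 * C) * errTerm n m := by
    gcongr
    exact one_div_le_errTerm hm hmn
  linarith

end IsDickmanExt

end PolyProbBounds

/-- For every `ε > 0` there exists `C > 0` such that for every prime power
`q` (the cardinality of a finite field `F`) and all integers `n ≥ m ≥ (2+ε)·log_q n`,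
writing `u = n/m`, one has
`|log p_{n,m,q} − log ρ(n/m − n/(2m²))| ≤ C·(u·(log(u+1))²/m² + 1/u)`. -/
theorem stmt8 :
    ∀ ε : ℝ, 0 < ε → ∃ C : ℝ, 0 < C ∧
      ∀ (F : Type) [Field F] [Fintype F], ∀ n m : ℕ, 1 ≤ m → m ≤ n →
      (2 + ε) * Real.log n / Real.log (Fintype.card F) ≤ (m : ℝ) →
      ∀ ρ : ℝ → ℝ, IsDickman ρ → ∀ u : ℝ, u = (n : ℝ) / (m : ℝ) →
      |Real.log (polyProb F n m) -
          Real.log (ρ ((n : ℝ) / (m : ℝ) - (n : ℝ) / (2 * (m : ℝ) ^ 2)))| ≤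
        C * (u * (Real.log (u + 1)) ^ 2 / (m : ℝ) ^ 2 + 1 / u) := by
  intro ε hε
  set C := exp ((1 + ε / 2) * log (2 * (2 + ε) / ε))
  set M := 8 * C + 2
  have hC : 0 < C := exp_pos _
  have hM : 0 < (10 + 4 * M) * M ^ 2 := by positivity
  refine ⟨85 + 8 * C + (10 + 4 * M) * M ^ 2, by positivity, ?_⟩
  rintro F _ _ n m hm hmn hmq ρ hρ _ rfl
  have h := hρ.isDickmanExt
  have hE := errTerm_pos hm hmn
  have harg := h.abs_log_sub_log_midGrid_le hm hmn
  rw [max_eq_left (div_sub_div_two_mul_sq_nonneg hm), abs_sub_comm] at harg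
  refine (abs_sub_le _ _ _).trans ((add_le_add_right harg _).trans ?_)
  rw [← errTerm, ← le_sub_iff_add_le]
  rcases le_total M m with hMm | hmM
  · have hX := h.exp_negLogDeriv_midGrid_mul_le hε (mod_cast Fintype.one_lt_card) hm hmn hmq
    have hm₂ : 2 ≤ m := by exact_mod_cast (by linarith : (2 : ℝ) ≤ m)
    have hlower := h.log_midGrid_sub_le_log_polyProb (F := F) hm₂ hmn
    have hupper := h.log_polyProb_le hm hmn hX (by linarith)
    have hME := mul_pos hM hE
    have hCE := mul_pos hC hE
    rw [abs_le]
    constructor <;> linarith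
  · have hR := h.abs_log_midGrid_le hm hmn hmM
    have hP := abs_log_polyProb_le (F := F) hm hmn hmM
    have hCE := mul_pos hC hE
    linarith [abs_sub (log (polyProb F n m)) (log (ρ (max (midGrid m n) 0)))]
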